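/- Let L be a ℤ-graded Lie conformal algebra of class 𝒱 with deg p_{−1,1}(∂) = 2. Then L is isomorphic, as a Lie conformal algebra, to ECL(s) for some s ∈ ℂ. -/

import Mathlib

open scoped BigOperators Classical ENNReal
open Polynomial

noncomputable section

/-- A Lie conformal algebra over `ℂ`, encoded via its `n`-th products
`a_(n) b` and the operator `∂ = D`.  The `λ`-bracket is
`[a_λ b] = ∑ₙ (λⁿ/n!) • (a_(n) b)`. -/
structure LieConformalAlgebra (L : Type) [AddCommGroup L] [Module ℂ L] : Type where
  D : L →ₗ[ℂ] L
  prd : ℕ → L →ₗ[ℂ] L →ₗ[ℂ] L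
  bound : ∀ a b : L, ∃ N : ℕ, ∀ n : ℕ, N ≤ n → prd n a b = 0
  sesq : ∀ (n : ℕ) (a b : L), prd n (D a) b = (-(n : ℂ)) • prd (n - 1) a b
  sesq' : ∀ (n : ℕ) (a b : L),
    prd n a (D b) = D (prd n a b) + (n : ℂ) • prd (n - 1) a b
  skew : ∀ (n : ℕ) (a b : L),
    prd n a b
      = - ∑ᶠ j : ℕ, ((-1 : ℂ) ^ (n + j) * ((Nat.factorial j : ℂ))⁻¹) • (⇑D)^[j] (prd (n + j) b a)
  jacobi : ∀ (m n : ℕ) (a b c : L),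
    prd m a (prd n b c) - prd n b (prd m a c)
      = ∑ j ∈ Finset.range (m + 1), (Nat.choose m j : ℂ) • prd (m + n - j) (prd j a b) c

namespace LieConformalAlgebra

variable {L : Type} [AddCommGroup L] [Module ℂ L]

/-- The action of a polynomial `q(∂) ∈ ℂ[∂]` on an element. -/
def applyP (C : LieConformalAlgebra L) (q : Polynomial ℂ) (x : L) : L :=
  q.sum fun k c => c • (⇑C.D)^[k] x

/-- `[a_λ b] = p(∂, λ) • t`, where `p ∈ ℂ[∂][λ]` is a two-variable polynomial
(outer variable `λ`, inner variable `∂`). -/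
def BracketEq (C : LieConformalAlgebra L) (a b t : L) (p : Polynomial (Polynomial ℂ)) : Prop :=
  ∀ n : ℕ, C.prd n a b = (Nat.factorial n : ℂ) • C.applyP (p.coeff n) t

def IsSubalgebra (C : LieConformalAlgebra L) (N : Submodule ℂ L) : Prop :=
  (∀ x ∈ N, C.D x ∈ N) ∧ ∀ n : ℕ, ∀ a ∈ N, ∀ b ∈ N, C.prd n a b ∈ N

def IsIdeal (C : LieConformalAlgebra L) (N : Submodule ℂ L) : Prop :=
  (∀ x ∈ N, C.D x ∈ N) ∧ ∀ (n : ℕ) (a : L), ∀ b ∈ N, C.prd n a b ∈ N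

/-- `L` is finitely generated as a Lie conformal algebra (finite type). -/
def FiniteType (C : LieConformalAlgebra L) : Prop :=
  ∃ s : Finset L, ∀ N : Submodule ℂ L, C.IsSubalgebra N → (s : Set L) ⊆ (N : Set L) → N = ⊤

/-- `L` is finitely generated as a `ℂ[∂]`-module. -/
def FGPolyModule (C : LieConformalAlgebra L) : Prop :=
  ∃ s : Finset L, ∀ N : Submodule ℂ L, (∀ x ∈ N, C.D x ∈ N) → (s : Set L) ⊆ (N : Set L) → N = ⊤

/-- Iterated adjoint action `a₁_(k₁)(a₂_(k₂)(⋯ x))`. -/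
def iterPrd (C : LieConformalAlgebra L) : List (L × ℕ) → L → L
  | [], x => x
  | (a, k) :: t, x => C.prd k a (iterPrd C t x)

/-- The `ℂ[∂]`-rank of the submodule `N` is at most `r`:
any `r+1` elements of `N` are `ℂ[∂]`-linearly dependent. -/
def polyRankLE (C : LieConformalAlgebra L) (N : Submodule ℂ L) (r : ℕ) : Prop :=
  ∀ v : Fin (r + 1) → L, (∀ k, v k ∈ N) →
    ∃ q : Fin (r + 1) → Polynomial ℂ, (∃ k, q k ≠ 0) ∧ ∑ k, C.applyP (q k) (v k) = 0

/-- The family `v` is a free `ℂ[∂]`-basis of `L`. -/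
def IsFreePolyBasis (C : LieConformalAlgebra L) {ι : Type} (v : ι → L) : Prop :=
  LinearIndependent ℂ (fun q : ι × ℕ => (⇑C.D)^[q.2] (v q.1)) ∧
  Submodule.span ℂ (Set.range fun q : ι × ℕ => (⇑C.D)^[q.2] (v q.1)) = ⊤

/-- `[U_λ V]`: the `ℂ`-span of all `u_(n) v`. -/
def bspan (C : LieConformalAlgebra L) (U V : Set L) : Submodule ℂ L :=
  Submodule.span ℂ {x : L | ∃ (n : ℕ) (u : L) (w : L), u ∈ U ∧ w ∈ V ∧ x = C.prd n u w}

end LieConformalAlgebra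

/-- `∂` as an element of `ℂ[∂][λ]`. -/
def Pd : Polynomial (Polynomial ℂ) := Polynomial.C Polynomial.X
/-- `λ` as an element of `ℂ[∂][λ]`. -/
def Pl : Polynomial (Polynomial ℂ) := Polynomial.X
/-- a constant in `ℂ[∂][λ]`. -/
def Pc (a : ℂ) : Polynomial (Polynomial ℂ) := Polynomial.C (Polynomial.C a)

/-- Total degree of a two-variable polynomial in `ℂ[∂][λ]`. -/
def tdeg (p : Polynomial (Polynomial ℂ)) : ℕ :=
  p.support.sup fun n => n + (p.coeff n).natDegree

section ModelPolynomials

/-- structure polynomials of `𝒱(s)` -/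
def pV (s : ℂ) (i j : ℤ) : Polynomial (Polynomial ℂ) :=
  Pd + Pc 2 * Pl + Pc (s * ((i : ℂ) - (j : ℂ)))

/-- structure polynomials of `CL₁(s)` -/
def pCL1 (s : ℂ) (i j : ℤ) : Polynomial (Polynomial ℂ) :=
  Pc ((i : ℂ) + 1) * Pd + Pc ((i : ℂ) + (j : ℂ) + 2) * Pl + Pc (s * ((i : ℂ) - (j : ℂ)))

/-- structure polynomials of `CL₂(b,s)` -/
def pCL2 (b s : ℂ) (i j : ℤ) : Polynomial (Polynomial ℂ) :=
  Pc ((i : ℂ) + b) * Pd + Pc ((i : ℂ) + (j : ℂ) + 2 * b) * Pl + Pc (s * ((i : ℂ) - (j : ℂ)))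

/-- structure polynomials of `SCL₂(b,s)` (for `2b ∈ ℤ`), w.r.t. the basis
`L'ᵢ = Lᵢ (i ≠ -2b)`, `L'_{-2b} = (∂+2s)L_{-2b}` of the corresponding graded
subalgebra of `CL₂(b,s)`. -/
def pSCL2 (b s : ℂ) (i j : ℤ) : Polynomial (Polynomial ℂ) :=
  (if (i : ℂ) = -(2 * b) then Pc (2 * s) - Pl else 1) *
  (if (j : ℂ) = -(2 * b) then Pd + Pl + Pc (2 * s) else 1) *
  (if (i : ℂ) + (j : ℂ) = -(2 * b) then Pc ((i : ℂ) + b) else pCL2 b s i j)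

/-- structure polynomials of `CL₃(s)` -/
def pCL3 (s : ℂ) (i j : ℤ) : Polynomial (Polynomial ℂ) :=
  if i + j = 0 then Pc (i : ℂ) * (Pd + Pc s)
  else if i = 0 then Pc (-(j : ℂ)) * (Pc (2 * s) - Pl)
  else if j = 0 then Pc (i : ℂ) * (Pd + Pl + Pc (2 * s))
  else Pc (i : ℂ) * Pd + Pc ((i : ℂ) + (j : ℂ)) * Pl + Pc (s * ((i : ℂ) - (j : ℂ)))

/-- structure polynomials of `ECL(s)` -/
def pECL (s : ℂ) (i j : ℤ) : Polynomial (Polynomial ℂ) :=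
  if i + j = 0 then Pc (i : ℂ) * (Pd + Pc s) * (Pd + Pc (2 * s))
  else if i = 0 then Pc (-(j : ℂ))
  else if j = 0 then Pc (i : ℂ)
  else Pc (i : ℂ) * Pd + Pc ((i : ℂ) + (j : ℂ)) * Pl + Pc (s * ((i : ℂ) - (j : ℂ)))

/-- structure polynomials of `M(1)` (indices `≥ -1`, completed by skew-symmetry) -/
def pM1 (i j : ℤ) : Polynomial (Polynomial ℂ) :=
  if i = 1 ∧ j = 1 then Pd + Pc 2 * Pl
  else if i = -1 ∧ 1 ≤ j then Pc (((j : ℂ) + 1) * ((j : ℂ) - 2) / 2)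
  else if j = -1 ∧ 1 ≤ i then Pc (-(((i : ℂ) + 1) * ((i : ℂ) - 2) / 2))
  else if i = 0 then Pc (-(j : ℂ))
  else if j = 0 then Pc (i : ℂ)
  else if i = 1 ∧ 2 ≤ j then 1
  else if j = 1 ∧ 2 ≤ i then -1
  else 0

/-- structure polynomials of `M(2)` (completed by skew-symmetry) -/
def pM2 (i j : ℤ) : Polynomial (Polynomial ℂ) :=
  if i = 1 ∧ j = 1 then Pd + Pc 2 * Pl
  else if i = -1 ∧ j = -1 then Pd + Pc 2 * Pl
  else if i = 0 then Pc (-(j : ℂ))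
  else if j = 0 then Pc (i : ℂ)
  else if i = -1 ∧ 1 ≤ j then Pc (((j : ℂ) + 1) * ((j : ℂ) - 2) / 2)
  else if j = -1 ∧ 1 ≤ i then Pc (-(((i : ℂ) + 1) * ((i : ℂ) - 2) / 2))
  else if i = 1 ∧ j ≤ -2 then Pc (((j : ℂ) - 1) * ((j : ℂ) + 2) / 2)
  else if j = 1 ∧ i ≤ -2 then Pc (-(((i : ℂ) - 1) * ((i : ℂ) + 2) / 2))
  else if i = -1 ∧ j ≤ -2 then 1
  else if j = -1 ∧ i ≤ -2 then -1
  else if i = 1 ∧ 2 ≤ j then 1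
  else if j = 1 ∧ 2 ≤ i then -1
  else 0

end ModelPolynomials

namespace LieConformalAlgebra

variable {L : Type} [AddCommGroup L] [Module ℂ L]

/-- `C` is isomorphic to the Virasoro Lie conformal algebra. -/
def IsVir (C : LieConformalAlgebra L) : Prop :=
  ∃ e : L, C.IsFreePolyBasis (fun _ : Unit => e) ∧ C.BracketEq e e e (Pd + Pc 2 * Pl)

/-- `C` is isomorphic to the loop Virasoro Lie conformal algebra `𝒱(s)`. -/
def IsV (C : LieConformalAlgebra L) (s : ℂ) : Prop :=
  ∃ v : ℤ → L, C.IsFreePolyBasis v ∧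
    ∀ i j : ℤ, C.BracketEq (v i) (v j) (v (i + j)) (pV s i j)

/-- `C` is isomorphic to `CL₁(s)`. -/
def IsCL1 (C : LieConformalAlgebra L) (s : ℂ) : Prop :=
  ∃ v : ℤ → L, C.IsFreePolyBasis (fun q : {i : ℤ // -1 ≤ i} => v q.1) ∧
    ∀ i j : ℤ, -1 ≤ i → -1 ≤ j →
      C.BracketEq (v i) (v j) (if -1 ≤ i + j then v (i + j) else 0) (pCL1 s i j)

/-- `C` is isomorphic to `CL₂(b,s)`. -/
def IsCL2 (C : LieConformalAlgebra L) (b s : ℂ) : Prop :=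
  ∃ v : ℤ → L, C.IsFreePolyBasis v ∧
    ∀ i j : ℤ, C.BracketEq (v i) (v j) (v (i + j)) (pCL2 b s i j)

/-- `C` is isomorphic to `SCL₂(b,s)`. -/
def IsSCL2 (C : LieConformalAlgebra L) (b s : ℂ) : Prop :=
  ∃ v : ℤ → L, C.IsFreePolyBasis v ∧
    ∀ i j : ℤ, C.BracketEq (v i) (v j) (v (i + j)) (pSCL2 b s i j)

/-- `C` is isomorphic to `CL₃(s)`. -/
def IsCL3 (C : LieConformalAlgebra L) (s : ℂ) : Prop :=
  ∃ v : ℤ → L, C.IsFreePolyBasis v ∧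
    ∀ i j : ℤ, C.BracketEq (v i) (v j) (v (i + j)) (pCL3 s i j)

/-- `C` is isomorphic to `ECL(s)`. -/
def IsECL (C : LieConformalAlgebra L) (s : ℂ) : Prop :=
  ∃ v : ℤ → L, C.IsFreePolyBasis v ∧
    ∀ i j : ℤ, C.BracketEq (v i) (v j) (v (i + j)) (pECL s i j)

/-- `C` is isomorphic to `M(1)`. -/
def IsM1 (C : LieConformalAlgebra L) : Prop :=
  ∃ v : ℤ → L, C.IsFreePolyBasis (fun q : {i : ℤ // -1 ≤ i} => v q.1) ∧
    ∀ i j : ℤ, -1 ≤ i → -1 ≤ j →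
      C.BracketEq (v i) (v j) (if -1 ≤ i + j then v (i + j) else 0) (pM1 i j)

/-- `C` is isomorphic to `M(2)`. -/
def IsM2 (C : LieConformalAlgebra L) : Prop :=
  ∃ v : ℤ → L, C.IsFreePolyBasis v ∧
    ∀ i j : ℤ, C.BracketEq (v i) (v j) (v (i + j)) (pM2 i j)

/-- `C` is isomorphic to the current Lie conformal algebra `Cur 𝔤`. -/
def IsCur (C : LieConformalAlgebra L) (g : Type) [LieRing g] [LieAlgebra ℂ g] : Prop :=
  ∃ φ : g →ₗ[ℂ] L,
    Function.Bijective (fun f : ℕ →₀ g => f.sum fun k x => (⇑C.D)^[k] (φ x)) ∧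
    (∀ x y : g, C.prd 0 (φ x) (φ y) = φ ⁅x, y⁆) ∧
    ∀ n : ℕ, 1 ≤ n → ∀ x y : g, C.prd n (φ x) (φ y) = 0

/-- `C ≅ Cur sl(2,ℂ)`. -/
def IsCurSl2 (C : LieConformalAlgebra L) : Prop :=
  C.IsCur ↥(LieAlgebra.SpecialLinear.sl (Fin 2) ℂ)

/-- `C ≅ Cur 𝒲`, `𝒲` the Witt algebra (basis `wᵢ`, `[wᵢ,wⱼ] = (j-i)w_{i+j}`). -/
def IsCurWitt (C : LieConformalAlgebra L) : Prop :=
  ∃ v : ℤ → L, C.IsFreePolyBasis v ∧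
    (∀ i j : ℤ, C.prd 0 (v i) (v j) = (((j : ℂ) - (i : ℂ))) • v (i + j)) ∧
    ∀ n : ℕ, 1 ≤ n → ∀ i j : ℤ, C.prd n (v i) (v j) = 0

/-- `C ≅ Cur 𝒲₁`, `𝒲₁` spanned by the `wᵢ`, `i ≥ -1`. -/
def IsCurWitt1 (C : LieConformalAlgebra L) : Prop :=
  ∃ v : ℤ → L, C.IsFreePolyBasis (fun q : {i : ℤ // -1 ≤ i} => v q.1) ∧
    (∀ i j : ℤ, -1 ≤ i → -1 ≤ j →
      C.prd 0 (v i) (v j) = (((j : ℂ) - (i : ℂ))) • (if -1 ≤ i + j then v (i + j) else 0)) ∧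
    ∀ n : ℕ, 1 ≤ n → ∀ i j : ℤ, -1 ≤ i → -1 ≤ j → C.prd n (v i) (v j) = 0

end LieConformalAlgebra

/-- A `ℤ`-graded Lie conformal algebra. -/
structure GradedLCA (L : Type) [AddCommGroup L] [Module ℂ L]
    extends LieConformalAlgebra L where
  G : ℤ → Submodule ℂ L
  internal : DirectSum.IsInternal G
  dGrade : ∀ i : ℤ, ∀ x ∈ G i, D x ∈ G i
  prdGrade : ∀ (i j : ℤ) (n : ℕ), ∀ a ∈ G i, ∀ b ∈ G j, prd n a b ∈ G (i + j)

namespace GradedLCA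

variable {L : Type} [AddCommGroup L] [Module ℂ L]

/-- A graded ideal: an ideal generated by homogeneous elements. -/
def IsGradedIdeal (C : GradedLCA L) (N : Submodule ℂ L) : Prop :=
  C.toLieConformalAlgebra.IsIdeal N ∧ (⨆ i : ℤ, N ⊓ C.G i) = N

/-- `L` is simple graded: nonzero bracket, and the only graded ideals are `⊥` and `⊤`. -/
def IsSimpleGraded (C : GradedLCA L) : Prop :=
  (∃ (n : ℕ) (a b : L), C.prd n a b ≠ 0) ∧
  ∀ N : Submodule ℂ L, C.IsGradedIdeal N → N = ⊥ ∨ N = ⊤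

/-- `[L_λ L] = L`. -/
def Perfect (C : GradedLCA L) : Prop :=
  Submodule.span ℂ {x : L | ∃ (n : ℕ) (a b : L), x = C.prd n a b} = ⊤

/-- Each component `L_i` is a nilpotent `L₀`-module under the adjoint action. -/
def Rootless (C : GradedLCA L) : Prop :=
  ∀ i : ℤ, ∃ n : ℕ, 1 ≤ n ∧ ∀ l : List (L × ℕ), l.length = n →
    (∀ q ∈ l, q.1 ∈ C.G 0) → ∀ x ∈ C.G i, C.toLieConformalAlgebra.iterPrd l x = 0

/-- The ranks of the components are uniformly bounded. -/
def UniformlyBounded (C : GradedLCA L) : Prop :=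
  ∃ N : ℕ, 1 ≤ N ∧ ∀ i : ℤ, C.toLieConformalAlgebra.polyRankLE (C.G i) N

end GradedLCA

/-- A module over a Lie conformal algebra, encoded via the `n`-th actions. -/
structure LCAModule {L : Type} [AddCommGroup L] [Module ℂ L] (C : LieConformalAlgebra L)
    (M : Type) [AddCommGroup M] [Module ℂ M] : Type where
  DM : M →ₗ[ℂ] M
  act : ℕ → L →ₗ[ℂ] M →ₗ[ℂ] M
  bound : ∀ (a : L) (m : M), ∃ N : ℕ, ∀ n : ℕ, N ≤ n → act n a m = 0
  sesq : ∀ (n : ℕ) (a : L) (m : M), act n (C.D a) m = (-(n : ℂ)) • act (n - 1) a m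
  sesq' : ∀ (n : ℕ) (a : L) (m : M),
    act n a (DM m) = DM (act n a m) + (n : ℂ) • act (n - 1) a m
  comm : ∀ (p q : ℕ) (a b : L) (m : M),
    act p a (act q b m) - act q b (act p a m)
      = ∑ j ∈ Finset.range (p + 1), (Nat.choose p j : ℂ) • act (p + q - j) (C.prd j a b) m

namespace LCAModule

variable {L : Type} [AddCommGroup L] [Module ℂ L] {C : LieConformalAlgebra L}
variable {M : Type} [AddCommGroup M] [Module ℂ M]

/-- Iterated action `a₁_(k₁)(a₂_(k₂)(⋯ m))`. -/
def iterAct (ρ : LCAModule C M) : List (L × ℕ) → M → M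
  | [], m => m
  | (a, k) :: t, m => ρ.act k a (iterAct ρ t m)

/-- `N` is an `L`-submodule of `M`. -/
def IsSub (ρ : LCAModule C M) (N : Submodule ℂ M) : Prop :=
  (∀ m ∈ N, ρ.DM m ∈ N) ∧ ∀ (n : ℕ) (a : L), ∀ m ∈ N, ρ.act n a m ∈ N

/-- `M` is a nilpotent module. -/
def Nilpotent (ρ : LCAModule C M) : Prop :=
  ∃ n : ℕ, 1 ≤ n ∧ ∀ l : List (L × ℕ), l.length = n → ∀ m : M, ρ.iterAct l m = 0

/-- `M` is finitely generated as an `L`-module. -/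
def FG (ρ : LCAModule C M) : Prop :=
  ∃ s : Finset M, ∀ N : Submodule ℂ M, ρ.IsSub N → (s : Set M) ⊆ (N : Set M) → N = ⊤

/-- The `L`-submodule `N` is finitely generated as an `L`-module. -/
def FGIn (ρ : LCAModule C M) (N : Submodule ℂ M) : Prop :=
  ∃ s : Finset M, (s : Set M) ⊆ (N : Set M) ∧
    ∀ P : Submodule ℂ M, ρ.IsSub P → (s : Set M) ⊆ (P : Set M) → N ≤ P

/-- `M` is finitely generated as a `ℂ[∂]`-module. -/
def FGPoly (ρ : LCAModule C M) : Prop :=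
  ∃ s : Finset M, ∀ N : Submodule ℂ M, (∀ m ∈ N, ρ.DM m ∈ N) → (s : Set M) ⊆ (N : Set M) → N = ⊤

end LCAModule

/-- A family is `ℂ[∂]`-linearly independent. -/
def polyIndep {M : Type} [AddCommGroup M] [Module ℂ M] (DM : M →ₗ[ℂ] M)
    {r : ℕ} (v : Fin r → M) : Prop :=
  ∀ q : Fin r → Polynomial ℂ,
    (∑ k, (q k).sum fun t c => c • (⇑DM)^[t] (v k)) = 0 → ∀ k, q k = 0

/-- The `ℂ[∂]`-rank of a submodule, in `ℕ∞`. -/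
def polyRank {M : Type} [AddCommGroup M] [Module ℂ M] (DM : M →ₗ[ℂ] M)
    (N : Submodule ℂ M) : ℕ∞ :=
  ⨆ r ∈ {r : ℕ | ∃ v : Fin r → M, (∀ k, v k ∈ N) ∧ polyIndep DM v}, (r : ℕ∞)

/-- A graded module over a `ℤ`-graded Lie conformal algebra. -/
structure GradedLCAModule {L : Type} [AddCommGroup L] [Module ℂ L] (C : GradedLCA L)
    (M : Type) [AddCommGroup M] [Module ℂ M]
    extends LCAModule C.toLieConformalAlgebra M where
  GM : ℤ → Submodule ℂ M
  internal : DirectSum.IsInternal GM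
  dGrade : ∀ i : ℤ, ∀ m ∈ GM i, DM m ∈ GM i
  actGrade : ∀ (i j : ℤ) (n : ℕ), ∀ a ∈ C.G i, ∀ m ∈ GM j, act n a m ∈ GM (i + j)

namespace GradedLCAModule

variable {L : Type} [AddCommGroup L] [Module ℂ L] {C : GradedLCA L}
variable {M : Type} [AddCommGroup M] [Module ℂ M]

/-- `Mⁿ = ⊕_{|i| ≤ n} M_i`. -/
def seg (ρ : GradedLCAModule C M) (n : ℕ) : Submodule ℂ M :=
  ⨆ i : ℤ, ⨆ _ : |i| ≤ (n : ℤ), ρ.GM i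

/-- `e(M) = liminf (1/n) rank_{ℂ[∂]} Mⁿ`. -/
def eM (ρ : GradedLCAModule C M) : ℝ≥0∞ :=
  Filter.atTop.liminf fun n : ℕ => (polyRank ρ.DM (ρ.seg n) : ℝ≥0∞) / (n : ℝ≥0∞)

/-- Each `M_i` is a nilpotent `L₀`-module. -/
def Weightless (ρ : GradedLCAModule C M) : Prop :=
  ∀ i : ℤ, ∃ n : ℕ, 1 ≤ n ∧ ∀ l : List (L × ℕ), l.length = n →
    (∀ q ∈ l, q.1 ∈ C.G 0) → ∀ m ∈ ρ.GM i, ρ.toLCAModule.iterAct l m = 0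

/-- The submodule `I(M)` generated by all homogeneous `v` lying in the span of
the iterated actions of `L` on `v`. -/
def IM (ρ : GradedLCAModule C M) : Submodule ℂ M :=
  sInf {N : Submodule ℂ M | ρ.toLCAModule.IsSub N ∧
    {v : M | (∃ i : ℤ, v ∈ ρ.GM i) ∧
      v ∈ Submodule.span ℂ
        {w : M | ∃ l : List (L × ℕ), 1 ≤ l.length ∧ w = ρ.toLCAModule.iterAct l v}} ⊆ N}

end GradedLCAModule

/-- The structure context for graded Lie conformal algebras all of whose
nonzero components are free of rank one over `ℂ[∂]`: fixed homogeneous bases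
`bas i` and structure polynomials `sp i j ∈ ℂ[∂][λ]`, with `0 ∈ Supp(L)` and
`L₀` abelian. -/
structure RankOneContext (L : Type) [AddCommGroup L] [Module ℂ L]
    extends GradedLCA L where
  bas : ℤ → L
  sp : ℤ → ℤ → Polynomial (Polynomial ℂ)
  bas_mem : ∀ i : ℤ, bas i ∈ G i
  bas_zero : ∀ i : ℤ, G i = ⊥ → bas i = 0
  bas_indep : ∀ i : ℤ, G i ≠ ⊥ → LinearIndependent ℂ fun k : ℕ => (⇑D)^[k] (bas i)
  bas_span : ∀ i : ℤ, G i ≠ ⊥ →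
    G i = Submodule.span ℂ (Set.range fun k : ℕ => (⇑D)^[k] (bas i))
  sp_brkt : ∀ (i j : ℤ) (n : ℕ),
    prd n (bas i) (bas j)
      = (Nat.factorial n : ℂ) • (((sp i j).coeff n).sum fun k c => c • (⇑D)^[k] (bas (i + j)))
  sp_zero : ∀ i j : ℤ, (G i = ⊥ ∨ G j = ⊥ ∨ G (i + j) = ⊥) → sp i j = 0
  supp_zero : G 0 ≠ ⊥
  abelian0 : ∀ n : ℕ, ∀ x ∈ G 0, ∀ y ∈ G 0, prd n x y = 0

/-- A Lie conformal algebra of class `𝒱`. -/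
structure ClassV (L : Type) [AddCommGroup L] [Module ℂ L]
    extends RankOneContext L where
  supp_one : G 1 ≠ ⊥
  supp_negone : G (-1) ≠ ⊥
  genV : ∀ N : Submodule ℂ L, (∀ x ∈ N, D x ∈ N) →
    (∀ n : ℕ, ∀ a ∈ N, ∀ b ∈ N, prd n a b ∈ N) →
    G 1 ≤ N → G 0 ≤ N → G (-1) ≤ N → N = ⊤
  ne_m11 : sp (-1) 1 ≠ 0
  ne_01 : sp 0 1 ≠ 0

/-!
Evaluating `λ`-brackets at numbers and at polynomials in `∂` turns skew-symmetry and the Jacobi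
identity into functional equations for the structure polynomials `p i j`. Write
`p (-1) 1 = f(∂)`. The Jacobi identity for `(0, -1, 1)` shows that `p 0 1 = φ(λ)` does not involve
`∂`, and the one for `(-1, 1, 1)` makes `g(a + b) - g(a - b)`, with `g(λ) = f(-λ) φ(λ)`, a product
of a function of `a` and a function of `b`. This forces `deg g ≤ 2`, so `φ` is constant, and
rescaling the basis gives `p 0 (±1) = ∓1` and `p (-1) 1 = -(∂² + 3s∂ + c)`.

The Jacobi identity for `(-1, 1, n)` then gives the product of `p 1 n` and `p (-1) (n + 1)`, and
hence these polynomials themselves up to reciprocal scalars: for `n ≥ 1` they are those of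
`CL₂(0, s)`. This is possible for `n = 2` only if `c = 2s²`. The reflection `i ↦ -i` of the grading
gives the negative indices, and the Jacobi identity for `(1, i, j)` recovers all `p i j` from the
`p 1 j`.
-/

theorem sum_range_sum_antidiagonal_eq_sum_range_sum_range {M : Type*} [AddCommMonoid M]
    {f : ℕ → ℕ → M} {N : ℕ} (hf : ∀ i j, N ≤ i + j → f i j = 0) :
    ∑ m ∈ Finset.range N, ∑ p ∈ Finset.HasAntidiagonal.antidiagonal m, f p.1 p.2 =
      ∑ i ∈ Finset.range N, ∑ j ∈ Finset.range N, f i j := by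
  simp_rw [Finset.Nat.sum_antidiagonal_eq_sum_range_succ f]
  rw [Finset.sum_range_diag_flip]
  refine Finset.sum_congr rfl fun i _ => Finset.sum_subset ?_ fun j _ hj => hf i j ?_
  · exact Finset.range_mono (Nat.sub_le N i)
  · simpa [add_comm] using hj

theorem eventually_forall_apply_eq_zero {α β : Type*} [Zero α] [Zero β] {f : ℕ → α → β}
    {u : ℕ → α} (hf : ∀ v, ∀ᶠ n in Filter.atTop, f n v = 0) (hf₀ : ∀ n, f n 0 = 0)
    (hu : ∀ᶠ n in Filter.atTop, u n = 0) :
    ∀ᶠ N in Filter.atTop, ∀ m n, N ≤ m ∨ N ≤ n → f m (u n) = 0 := by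
  obtain ⟨K, hK⟩ := Filter.eventually_atTop.mp hu
  have hlow : ∀ᶠ N in Filter.atTop, ∀ n ∈ Finset.range K, ∀ m ≥ N, f m (u n) = 0 :=
    (Finset.eventually_all _).mpr fun n _ => Filter.eventually_forall_ge_atTop.mpr (hf (u n))
  filter_upwards [hlow, Filter.eventually_ge_atTop K] with N hN hKN m n hmn
  obtain hn | hn := lt_or_ge n K
  · exact hN n (Finset.mem_range.mpr hn) m (hmn.resolve_right (by lia))
  · rw [hK n hn, hf₀]

theorem map_aeval_apply_of_map_apply {R M N : Type*} [CommSemiring R] [AddCommMonoid M] [Module R M]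
    [AddCommMonoid N] [Module R N] {f : M →ₗ[R] N} {S : Module.End R M} {T : Module.End R N}
    (h : ∀ v, f (S v) = T (f v)) (q : R[X]) (v : M) :
    f (aeval S q v) = aeval T q (f v) := by
  induction q using Polynomial.induction_on generalizing v with
  | C a => simp [Algebra.algebraMap_eq_smul_one]
  | add p q hp hq => simp [hp, hq]
  | monomial n a ih =>
    have hX : (C a * X ^ (n + 1) : R[X]) = C a * X ^ n * X := by ring
    simp only [hX, map_mul _ (C a * X ^ n) X, aeval_X, Module.End.mul_apply, ih, h]

/-! ### Evaluation of `λ`-brackets -/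

namespace LieConformalAlgebra

open Finset.HasAntidiagonal (antidiagonal mem_antidiagonal)

variable {L : Type} [AddCommGroup L] [Module ℂ L] (A : LieConformalAlgebra L)

theorem applyP_eq_aeval (q : ℂ[X]) (v : L) : A.applyP q v = aeval A.D q v := by
  simp [applyP, aeval_eq_sum_range, sum_over_range, Module.End.pow_apply, LinearMap.sum_apply]

/-- The coefficient of `λ ^ n` in the `λ`-bracket. -/
def bracketCoeff (n : ℕ) : L →ₗ[ℂ] L →ₗ[ℂ] L := (n.factorial : ℂ)⁻¹ • A.prd n

theorem prd_eq_factorial_smul_bracketCoeff (n : ℕ) (a b : L) :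
    A.prd n a b = (n.factorial : ℂ) • A.bracketCoeff n a b := by
  simp [bracketCoeff, smul_smul, n.factorial_ne_zero]

theorem bracketEq_iff_bracketCoeff {a b t : L} {p : ℂ[X][X]} :
    A.BracketEq a b t p ↔ ∀ n, A.bracketCoeff n a b = aeval A.D (p.coeff n) t := by
  refine forall_congr' fun n => ?_
  rw [prd_eq_factorial_smul_bracketCoeff, applyP_eq_aeval]
  exact smul_right_inj (Nat.cast_ne_zero.mpr n.factorial_ne_zero)

theorem eventually_bracketCoeff_eq_zero (a b : L) :
    ∀ᶠ n in Filter.atTop, A.bracketCoeff n a b = 0 := by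
  filter_upwards [Filter.eventually_atTop.mpr (A.bound a b)] with n hn
  simp [bracketCoeff, hn]

theorem bracketCoeff_zero_D_left (a b : L) : A.bracketCoeff 0 (A.D a) b = 0 := by
  simp [bracketCoeff, A.sesq]

theorem bracketCoeff_succ_D_left (n : ℕ) (a b : L) :
    A.bracketCoeff (n + 1) (A.D a) b = -A.bracketCoeff n a b := by
  have hn : (n + 1 : ℂ) ≠ 0 := Nat.cast_add_one_ne_zero n
  simp only [bracketCoeff, LinearMap.smul_apply, A.sesq, smul_smul, ← neg_smul,
    add_tsub_cancel_right, Nat.factorial_succ, Nat.cast_mul, Nat.cast_succ]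
  congr 1
  field_simp

theorem bracketCoeff_zero_D_right (a b : L) :
    A.bracketCoeff 0 a (A.D b) = A.D (A.bracketCoeff 0 a b) := by
  simp [bracketCoeff, A.sesq']

theorem bracketCoeff_succ_D_right (n : ℕ) (a b : L) :
    A.bracketCoeff (n + 1) a (A.D b) =
      A.D (A.bracketCoeff (n + 1) a b) + A.bracketCoeff n a b := by
  have hn : (n + 1 : ℂ) ≠ 0 := Nat.cast_add_one_ne_zero n
  simp only [bracketCoeff, LinearMap.smul_apply, A.sesq', smul_add, smul_smul, map_smul,
    add_tsub_cancel_right, Nat.factorial_succ, Nat.cast_mul, Nat.cast_succ]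
  congr 2
  field_simp

theorem bracketCoeff_skew (n : ℕ) (a b : L) :
    A.bracketCoeff n a b =
      -∑ᶠ j : ℕ, ((-1 : ℂ) ^ (n + j) * (n + j).choose n) •
        (A.D ^ j) (A.bracketCoeff (n + j) b a) := by
  have hn : (n.factorial : ℂ) ≠ 0 := Nat.cast_ne_zero.mpr n.factorial_ne_zero
  rw [bracketCoeff, LinearMap.smul_apply, LinearMap.smul_apply, A.skew, smul_neg, smul_finsum]
  refine congrArg _ (finsum_congr fun j => ?_)
  rw [prd_eq_factorial_smul_bracketCoeff, ← Module.End.pow_apply, map_smul, smul_smul, smul_smul,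
    Nat.cast_add_choose]
  congr 1
  field_simp

theorem bracketCoeff_jacobi (m n : ℕ) (a b v : L) :
    A.bracketCoeff m a (A.bracketCoeff n b v) - A.bracketCoeff n b (A.bracketCoeff m a v) =
      ∑ p ∈ antidiagonal m, ((p.2 + n).choose p.2 : ℂ) •
        A.bracketCoeff (p.2 + n) (A.bracketCoeff p.1 a b) v := by
  have hjac := congrArg (fun v => ((m.factorial : ℂ)⁻¹ * (n.factorial : ℂ)⁻¹) • v)
    (A.jacobi m n a b v)
  simp only [smul_sub, Finset.smul_sum] at hjac
  rw [Finset.Nat.sum_antidiagonal_eq_sum_range_succ fun j k => ((k + n).choose k : ℂ) •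
    A.bracketCoeff (k + n) (A.bracketCoeff j a b) v]
  convert hjac using 1
  · simp [bracketCoeff, smul_smul, mul_comm]
  refine Finset.sum_congr rfl fun j hj => ?_
  have hjm : j ≤ m := Finset.mem_range_succ_iff.mp hj
  obtain ⟨k, rfl⟩ := Nat.exists_eq_add_of_le hjm
  have hm : ((j + k).factorial : ℂ) ≠ 0 := Nat.cast_ne_zero.mpr (Nat.factorial_ne_zero _)
  rw [show j + k + n - j = k + n by lia, show j + k - j = k by lia]
  simp only [bracketCoeff, LinearMap.smul_apply, map_smul, smul_smul, Nat.cast_add_choose]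
  congr 1
  have := Nat.cast_ne_zero (R := ℂ).mpr (Nat.factorial_ne_zero (k + n))
  field_simp

theorem hasFiniteSupport_aeval_pow_bracketCoeff (q : ℂ[X]) (a b : L) :
    (fun n => aeval A.D (q ^ n) (A.bracketCoeff n a b)).HasFiniteSupport := by
  obtain ⟨N, hN⟩ := Filter.eventually_atTop.mp (A.eventually_bracketCoeff_eq_zero a b)
  refine (Finset.range N).finite_toSet.subset fun n hn => ?_
  contrapose! hn
  simp [hN n (by simpa using hn)]

/-- The value of `[a_λ b]` at `λ = q(∂)`, the powers of `∂` being written to the left of the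
coefficients of `[a_λ b]`. -/
def bracketAt (q : ℂ[X]) : L →ₗ[ℂ] L →ₗ[ℂ] L :=
  LinearMap.mk₂ ℂ (fun a b => ∑ᶠ n, aeval A.D (q ^ n) (A.bracketCoeff n a b))
    (fun a a' b => by
      simp only [map_add, LinearMap.add_apply]
      exact finsum_add_distrib (A.hasFiniteSupport_aeval_pow_bracketCoeff q a b)
        (A.hasFiniteSupport_aeval_pow_bracketCoeff q a' b))
    (fun c a b => by simp only [map_smul, LinearMap.smul_apply, smul_finsum])
    (fun a b b' => by
      simp only [map_add]
      exact finsum_add_distrib (A.hasFiniteSupport_aeval_pow_bracketCoeff q a b)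
        (A.hasFiniteSupport_aeval_pow_bracketCoeff q a b'))
    (fun c a b => by simp only [map_smul, smul_finsum])

theorem bracketAt_eq_sum (q : ℂ[X]) {a b : L} {N : ℕ} (hN : ∀ n ≥ N, A.bracketCoeff n a b = 0) :
    A.bracketAt q a b = ∑ n ∈ Finset.range N, aeval A.D (q ^ n) (A.bracketCoeff n a b) := by
  refine finsum_eq_sum_of_support_subset _ fun n hn => ?_
  contrapose! hn
  simp [hN n (by simpa using hn)]

theorem bracketAt_D_left (q : ℂ[X]) (a b : L) :
    A.bracketAt q (A.D a) b = aeval A.D (-q) (A.bracketAt q a b) := by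
  obtain ⟨N, hN⟩ := Filter.eventually_atTop.mp (A.eventually_bracketCoeff_eq_zero a b)
  have hN' : ∀ n ≥ N + 1, A.bracketCoeff n (A.D a) b = 0 := fun n hn => by
    obtain ⟨m, rfl⟩ := Nat.exists_eq_add_of_le' (by lia : 1 ≤ n)
    rw [bracketCoeff_succ_D_left, hN m (by lia), neg_zero]
  rw [A.bracketAt_eq_sum q hN', A.bracketAt_eq_sum q hN, Finset.sum_range_succ', map_sum,
    bracketCoeff_zero_D_left, map_zero, add_zero]
  refine Finset.sum_congr rfl fun n _ => ?_
  simp only [bracketCoeff_succ_D_left, map_neg, LinearMap.neg_apply, pow_succ', map_mul,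
    Module.End.mul_apply]

theorem bracketAt_D_right (q : ℂ[X]) (a b : L) :
    A.bracketAt q a (A.D b) = aeval A.D (X + q) (A.bracketAt q a b) := by
  obtain ⟨N, hN⟩ := Filter.eventually_atTop.mp (A.eventually_bracketCoeff_eq_zero a b)
  have hN' : ∀ n ≥ N + 1, A.bracketCoeff n a (A.D b) = 0 := fun n hn => by
    obtain ⟨m, rfl⟩ := Nat.exists_eq_add_of_le' (by lia : 1 ≤ n)
    rw [bracketCoeff_succ_D_right, hN m (by lia), hN (m + 1) (by lia), map_zero, add_zero]
  have hD (n : ℕ) (v : L) : aeval A.D (q ^ n) (A.D v) = A.D (aeval A.D (q ^ n) v) :=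
    (map_aeval_apply_of_map_apply (f := A.D) (fun _ => rfl) (q ^ n) v).symm
  have hD_sum : A.D (A.bracketAt q a b) =
      ∑ n ∈ Finset.range (N + 1), aeval A.D (q ^ n) (A.D (A.bracketCoeff n a b)) := by
    rw [A.bracketAt_eq_sum q fun n (hn : n ≥ N + 1) => hN n (by lia), map_sum]
    simp only [hD]
  have hq_sum : aeval A.D q (A.bracketAt q a b) =
      ∑ n ∈ Finset.range N, aeval A.D (q ^ (n + 1)) (A.bracketCoeff n a b) := by
    simp only [A.bracketAt_eq_sum q hN, map_sum, pow_succ', map_mul, Module.End.mul_apply]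
  rw [map_add, aeval_X, LinearMap.add_apply, hD_sum, hq_sum, A.bracketAt_eq_sum q hN',
    Finset.sum_range_succ', Finset.sum_range_succ' _ N, bracketCoeff_zero_D_right]
  simp only [bracketCoeff_succ_D_right, map_add, Finset.sum_add_distrib]
  abel

theorem bracketAt_aeval_left (q r : ℂ[X]) (a b : L) :
    A.bracketAt q (aeval A.D r a) b = aeval A.D (r.comp (-q)) (A.bracketAt q a b) := by
  rw [aeval_comp]
  exact map_aeval_apply_of_map_apply (f := (A.bracketAt q).flip b)
    (fun v => A.bracketAt_D_left q v b) r a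

theorem bracketAt_aeval_right (q r : ℂ[X]) (a b : L) :
    A.bracketAt q a (aeval A.D r b) = aeval A.D (r.comp (X + q)) (A.bracketAt q a b) := by
  rw [aeval_comp]
  exact map_aeval_apply_of_map_apply (A.bracketAt_D_right q a) r b

theorem bracketAt_skew (q : ℂ[X]) (a b : L) :
    A.bracketAt q a b = -A.bracketAt (-q - X) b a := by
  obtain ⟨N, hN⟩ := ((A.eventually_bracketCoeff_eq_zero a b).and
    (A.eventually_bracketCoeff_eq_zero b a)).exists_forall_of_atTop
  obtain ⟨hab, hba⟩ := forall₂_and.mp hN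
  let f (n j : ℕ) : L := ((-1 : ℂ) ^ (n + j) * (n + j).choose n) •
    aeval A.D (q ^ n * X ^ j) (A.bracketCoeff (n + j) b a)
  have hf (n j : ℕ) (h : N ≤ n + j) : f n j = 0 := by simp [f, hba _ h]
  have hleft (n : ℕ) : aeval A.D (q ^ n) (A.bracketCoeff n a b) =
      -∑ j ∈ Finset.range N, f n j := by
    rw [bracketCoeff_skew, finsum_eq_sum_of_support_subset (s := Finset.range N)]
    · simp [f, map_sum]
    · intro j hj
      contrapose! hj
      simp [hba (n + j) (le_add_left (by simpa using hj))]
  have hright (m : ℕ) : aeval A.D ((-q - X) ^ m) (A.bracketCoeff m b a) =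
      ∑ p ∈ antidiagonal m, f p.1 p.2 := by
    have hpow : (-q - X) ^ m =
        ∑ p ∈ antidiagonal m, ((-1 : ℂ) ^ m * m.choose p.1) • (q ^ p.1 * X ^ p.2) := by
      rw [← neg_add', neg_pow, (Commute.all q X).add_pow', Finset.mul_sum]
      refine Finset.sum_congr rfl fun p _ => ?_
      simp [smul_eq_C_mul, mul_assoc]
    rw [hpow, map_sum, LinearMap.sum_apply]
    refine Finset.sum_congr rfl fun p hp => ?_
    obtain rfl := mem_antidiagonal.mp hp
    rw [map_smul, LinearMap.smul_apply]
  rw [A.bracketAt_eq_sum q hab, A.bracketAt_eq_sum _ hba]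
  simp only [hleft, hright, Finset.sum_neg_distrib]
  rw [sum_range_sum_antidiagonal_eq_sum_range_sum_range hf]

theorem bracketAt_C_eq_sum (x : ℂ) {a b : L} {N : ℕ} (hN : ∀ n ≥ N, A.bracketCoeff n a b = 0) :
    A.bracketAt (C x) a b = ∑ n ∈ Finset.range N, x ^ n • A.bracketCoeff n a b := by
  simp only [A.bracketAt_eq_sum _ hN, ← C_pow, aeval_C, Module.algebraMap_end_apply]

theorem bracketAt_C_bracketAt_C_eq_sum (x y : ℂ) {a b v : L} {N : ℕ}
    (hN : ∀ m n, N ≤ m ∨ N ≤ n → A.bracketCoeff m a (A.bracketCoeff n b v) = 0)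
    (hb : ∀ n ≥ N, A.bracketCoeff n b v = 0) :
    A.bracketAt (C x) a (A.bracketAt (C y) b v) = ∑ m ∈ Finset.range N, ∑ n ∈ Finset.range N,
      (x ^ m * y ^ n) • A.bracketCoeff m a (A.bracketCoeff n b v) := by
  rw [A.bracketAt_C_eq_sum y hb, map_sum, Finset.sum_comm]
  refine Finset.sum_congr rfl fun n _ => ?_
  rw [map_smul, A.bracketAt_C_eq_sum x fun m hm => hN m n (.inl hm), Finset.smul_sum]
  exact Finset.sum_congr rfl fun m _ => by rw [smul_smul, mul_comm]

/-- Both sides are the generating function of the coefficients `(m, n)`; on the right they are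
collected from the expansion of `(x + y) ^ k`. -/
theorem bracketAt_bracketAt_C_eq_sum (x y : ℂ) {a b v : L} {N : ℕ}
    (hab : ∀ n ≥ N, A.bracketCoeff n a b = 0)
    (hN : ∀ j k, N ≤ j + k → A.bracketCoeff k (A.bracketCoeff j a b) v = 0) :
    A.bracketAt (C (x + y)) (A.bracketAt (C x) a b) v = ∑ m ∈ Finset.range N,
      ∑ n ∈ Finset.range N, (x ^ m * y ^ n) • ∑ p ∈ antidiagonal m, ((p.2 + n).choose p.2 : ℂ) •
        A.bracketCoeff (p.2 + n) (A.bracketCoeff p.1 a b) v := by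
  let f (n j k : ℕ) : L := (x ^ (j + k) * y ^ n * (k + n).choose k) •
    A.bracketCoeff (k + n) (A.bracketCoeff j a b) v
  have hf (n j k : ℕ) (h : N ≤ j + k + n) : f n j k = 0 := by
    simp [f, hN j (k + n) (by lia)]
  have hright (m n : ℕ) : (x ^ m * y ^ n) • ∑ p ∈ antidiagonal m, ((p.2 + n).choose p.2 : ℂ) •
      A.bracketCoeff (p.2 + n) (A.bracketCoeff p.1 a b) v = ∑ p ∈ antidiagonal m, f n p.1 p.2 := by
    rw [Finset.smul_sum]
    refine Finset.sum_congr rfl fun p hp => ?_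
    rw [smul_smul, ← mem_antidiagonal.mp hp]
  have hleft (j : ℕ) : A.bracketAt (C (x + y)) (x ^ j • A.bracketCoeff j a b) v =
      ∑ k ∈ Finset.range N, ∑ n ∈ Finset.range N, f n j k := by
    rw [map_smul, LinearMap.smul_apply,
      A.bracketAt_C_eq_sum (x + y) fun k hk => hN j k (le_add_left hk), Finset.smul_sum,
      ← sum_range_sum_antidiagonal_eq_sum_range_sum_range (f := fun k n => f n j k)
        fun k n h => hf n j k (by lia)]
    refine Finset.sum_congr rfl fun k _ => ?_
    rw [(Commute.all x y).add_pow', Finset.sum_smul, Finset.smul_sum]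
    refine Finset.sum_congr rfl fun p hp => ?_
    obtain rfl := mem_antidiagonal.mp hp
    simp only [f, smul_smul, nsmul_eq_mul]
    ring_nf
  simp only [A.bracketAt_C_eq_sum x hab, map_sum, LinearMap.sum_apply, hleft, hright]
  have htriangle (n : ℕ) : ∑ m ∈ Finset.range N, ∑ p ∈ antidiagonal m, f n p.1 p.2 =
      ∑ j ∈ Finset.range N, ∑ k ∈ Finset.range N, f n j k :=
    sum_range_sum_antidiagonal_eq_sum_range_sum_range fun j k h => hf n j k (le_add_right h)
  rw [Finset.sum_comm (f := fun m n => ∑ p ∈ antidiagonal m, f n p.1 p.2), Finset.sum_comm_cycle]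
  simp only [htriangle]

theorem bracketAt_C_jacobi (x y : ℂ) (a b v : L) :
    A.bracketAt (C x) a (A.bracketAt (C y) b v) =
      A.bracketAt (C (x + y)) (A.bracketAt (C x) a b) v +
        A.bracketAt (C y) b (A.bracketAt (C x) a v) := by
  have htail (a b : L) : ∀ᶠ N in Filter.atTop, ∀ n ≥ N, A.bracketCoeff n a b = 0 :=
    Filter.eventually_forall_ge_atTop.mpr (A.eventually_bracketCoeff_eq_zero a b)
  have hnested (a b v : L) : ∀ᶠ N in Filter.atTop, ∀ m n, N ≤ m ∨ N ≤ n →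
      A.bracketCoeff m a (A.bracketCoeff n b v) = 0 :=
    eventually_forall_apply_eq_zero (f := fun m => A.bracketCoeff m a)
      (A.eventually_bracketCoeff_eq_zero a) (fun _ => map_zero _)
      (A.eventually_bracketCoeff_eq_zero b v)
  have houter : ∀ᶠ N in Filter.atTop, ∀ k j, N ≤ k ∨ N ≤ j →
      A.bracketCoeff k (A.bracketCoeff j a b) v = 0 :=
    eventually_forall_apply_eq_zero (f := fun k u => A.bracketCoeff k u v)
      (fun u => A.eventually_bracketCoeff_eq_zero u v) (fun _ => by simp)
      (A.eventually_bracketCoeff_eq_zero a b)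
  have houter_add : ∀ᶠ N in Filter.atTop, ∀ j k, N ≤ j + k →
      A.bracketCoeff k (A.bracketCoeff j a b) v = 0 := by
    obtain ⟨K, hK⟩ := houter.exists
    filter_upwards [Filter.eventually_ge_atTop (2 * K)] with N hN j k hjk
    exact hK k j (by lia)
  obtain ⟨N, hab, hbv, hav, habv, hbav, h⟩ :=
    ((htail a b).and ((htail b v).and ((htail a v).and
      ((hnested a b v).and ((hnested b a v).and houter_add))))).exists
  rw [A.bracketAt_C_bracketAt_C_eq_sum x y habv hbv, A.bracketAt_C_bracketAt_C_eq_sum y x hbav hav,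
    A.bracketAt_bracketAt_C_eq_sum x y hab h, Finset.sum_comm (f := fun m n =>
      (y ^ m * x ^ n) • A.bracketCoeff m b (A.bracketCoeff n a v)), ← sub_eq_iff_eq_add]
  simp only [← Finset.sum_sub_distrib, mul_comm (y ^ _), ← smul_sub, A.bracketCoeff_jacobi]

end LieConformalAlgebra

/-! ### Functional equations for the structure polynomials -/

theorem eq_of_forall_evalEval_eq {R : Type*} [CommRing R] [IsDomain R] [Infinite R] {p q : R[X][X]}
    (h : ∀ x y, p.evalEval x y = q.evalEval x y) : p = q := by
  refine eq_of_infinite_eval_eq p q ((Set.infinite_range_of_injective C_injective).mono ?_)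
  rintro _ ⟨y, rfl⟩
  exact Polynomial.funext fun x => h x y

theorem eval_eval_eq_evalEval {R : Type*} [CommSemiring R] (p : R[X][X]) (q : R[X]) (t : R) :
    (p.eval q).eval t = p.evalEval t (q.eval t) := by
  rw [← eval₂_evalRingHom, ← coe_evalRingHom, ← eval₂_at_apply]

@[simp] theorem evalEval_Pd (x y : ℂ) : Pd.evalEval x y = x := by simp [Pd, evalEval]

@[simp] theorem evalEval_Pl (x y : ℂ) : Pl.evalEval x y = y := by simp [Pl]

@[simp] theorem evalEval_Pc (c x y : ℂ) : (Pc c).evalEval x y = c := by simp [Pc]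

theorem evalEval_pCL2_zero (s : ℂ) (i j : ℤ) (x y : ℂ) :
    (pCL2 0 s i j).evalEval x y = i * x + (i + j) * y + s * (i - j) := by
  simp [pCL2]

/-- The functional equations satisfied by polynomials `p i j` for which the brackets
`[Lᵢ_λ Lⱼ] = p i j (∂, λ) Lᵢ₊ⱼ` satisfy skew-symmetry, the Jacobi identity and `[L₀_λ L₀] = 0`;
`(p i j).evalEval x y` is the value at `∂ = x`, `λ = y`. -/
structure IsStructureSystem (p : ℤ → ℤ → ℂ[X][X]) : Prop where
  skew (i j : ℤ) (x y : ℂ) : (p i j).evalEval x y = -(p j i).evalEval x (-y - x)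
  jacobi (i j k : ℤ) (x a b : ℂ) :
    (p j k).evalEval (x + a) b * (p i (j + k)).evalEval x a =
      (p i j).evalEval (-(a + b)) a * (p (i + j) k).evalEval x (a + b) +
        (p i k).evalEval (x + b) a * (p j (i + k)).evalEval x b
  abelian : p 0 0 = 0

namespace RankOneContext

variable {L : Type} [AddCommGroup L] [Module ℂ L] (A : RankOneContext L)

theorem bracketCoeff_bas (n : ℕ) (i j : ℤ) :
    A.bracketCoeff n (A.bas i) (A.bas j) = aeval A.D ((A.sp i j).coeff n) (A.bas (i + j)) :=
  A.bracketEq_iff_bracketCoeff.mp (A.sp_brkt i j) n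

theorem bracketAt_bas (q : ℂ[X]) (i j : ℤ) :
    A.bracketAt q (A.bas i) (A.bas j) = aeval A.D ((A.sp i j).eval q) (A.bas (i + j)) := by
  have hzero : ∀ n ≥ (A.sp i j).natDegree + 1, A.bracketCoeff n (A.bas i) (A.bas j) = 0 :=
    fun n hn => by rw [bracketCoeff_bas, coeff_eq_zero_of_natDegree_lt hn, map_zero]; rfl
  rw [A.bracketAt_eq_sum q hzero, eval_eq_sum_range, map_sum, LinearMap.sum_apply]
  refine Finset.sum_congr rfl fun n _ => ?_
  rw [bracketCoeff_bas, mul_comm, map_mul, Module.End.mul_apply]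

theorem aeval_D_bas_injective {i : ℤ} (hi : A.G i ≠ ⊥) :
    Function.Injective fun q : ℂ[X] => aeval A.D q (A.bas i) := by
  refine (injective_iff_map_eq_zero ((LinearMap.applyₗ (A.bas i)).comp
    (aeval (R := ℂ) A.D).toLinearMap)).mpr fun q hq => ?_
  have hsum : ∑ n ∈ Finset.range (q.natDegree + 1), q.coeff n • (⇑A.D)^[n] (A.bas i) = 0 := by
    simpa [aeval_eq_sum_range, LinearMap.sum_apply, Module.End.pow_apply] using hq
  ext n
  by_cases hn : n ∈ Finset.range (q.natDegree + 1)
  · exact linearIndependent_iff'.mp (A.bas_indep i hi) _ _ hsum n hn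
  · exact coeff_eq_zero_of_natDegree_lt (by simpa using hn)

theorem sp_skew (i j : ℤ) (x y : ℂ) :
    (A.sp i j).evalEval x y = -(A.sp j i).evalEval x (-y - x) := by
  by_cases hij : A.G (i + j) = ⊥
  · simp [A.sp_zero i j (.inr (.inr hij)), A.sp_zero j i (.inr (.inr (add_comm i j ▸ hij)))]
  have hpoly : (A.sp i j).eval (C y) = -(A.sp j i).eval (-C y - X) := by
    refine A.aeval_D_bas_injective hij ?_
    have hskew := A.bracketAt_skew (C y) (A.bas i) (A.bas j)
    rw [bracketAt_bas, bracketAt_bas, add_comm j i] at hskew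
    simpa using hskew
  simpa [eval_eval_eq_evalEval] using congrArg (eval x) hpoly

theorem sp_jacobi (i j k : ℤ) (x a b : ℂ) :
    (A.sp j k).evalEval (x + a) b * (A.sp i (j + k)).evalEval x a =
      (A.sp i j).evalEval (-(a + b)) a * (A.sp (i + j) k).evalEval x (a + b) +
        (A.sp i k).evalEval (x + b) a * (A.sp j (i + k)).evalEval x b := by
  by_cases hijk : A.G (i + (j + k)) = ⊥
  · simp [A.sp_zero i (j + k) (.inr (.inr hijk)),
      A.sp_zero (i + j) k (.inr (.inr (add_assoc i j k ▸ hijk))),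
      A.sp_zero j (i + k) (.inr (.inr (add_left_comm i j k ▸ hijk)))]
  have hpoly : ((A.sp j k).eval (C b)).comp (X + C a) * (A.sp i (j + k)).eval (C a) =
      ((A.sp i j).eval (C a)).comp (-C (a + b)) * (A.sp (i + j) k).eval (C (a + b)) +
        ((A.sp i k).eval (C a)).comp (X + C b) * (A.sp j (i + k)).eval (C b) := by
    refine A.aeval_D_bas_injective hijk ?_
    have hjacobi := A.bracketAt_C_jacobi a b (A.bas i) (A.bas j) (A.bas k)
    simp only [bracketAt_bas, LieConformalAlgebra.bracketAt_aeval_left,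
      LieConformalAlgebra.bracketAt_aeval_right] at hjacobi
    rw [add_assoc i j k, add_left_comm j i k] at hjacobi
    simpa only [map_add, map_mul, LinearMap.add_apply, Module.End.mul_apply] using hjacobi
  simpa [eval_eval_eq_evalEval, eval_comp] using congrArg (eval x) hpoly

theorem isStructureSystem_sp : IsStructureSystem A.sp where
  skew := A.sp_skew
  jacobi := A.sp_jacobi
  abelian := by
    refine Polynomial.ext fun n => A.aeval_D_bas_injective A.supp_zero ?_
    have hprd : A.bracketCoeff n (A.bas 0) (A.bas 0) = 0 := by
      simp [LieConformalAlgebra.bracketCoeff, A.abelian0 n _ (A.bas_mem 0) _ (A.bas_mem 0)]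
    simpa using (A.bracketCoeff_bas n 0 0).symm.trans hprd

end RankOneContext

theorem natDegree_le_two_of_eval_add_sub_eval_sub {R : Type*} [CommRing R] [IsDomain R]
    [CharZero R] {g p q : R[X]} (h : ∀ a b, g.eval (a + b) - g.eval (a - b) = p.eval b * q.eval a) :
    g.natDegree ≤ 2 := by
  have hodd (k : ℕ) (hk : Odd k) : C 2 * hasseDeriv k g = C (p.coeff k) * q := by
    refine Polynomial.funext fun a => ?_
    have hpoly : taylor a g - (taylor a g).comp (C (-1) * X) = p * C (q.eval a) :=
      Polynomial.funext fun b => by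
        simpa [taylor_eval, add_comm, sub_eq_add_neg] using h a b
    have hcoeff := congrArg (coeff · k) hpoly
    simp only [coeff_sub, comp_C_mul_X_coeff, hk.neg_one_pow, taylor_coeff, coeff_mul_C] at hcoeff
    simp only [eval_mul, eval_C]
    linear_combination hcoeff
  have hproportional : C (p.coeff 3) * hasseDeriv 1 g = C (p.coeff 1) * hasseDeriv 3 g := by
    refine mul_left_cancel₀ (C_ne_zero.mpr (two_ne_zero (α := R))) ?_
    linear_combination C (p.coeff 3) * hodd 1 odd_one - C (p.coeff 1) * hodd 3 (by decide)
  by_contra! hdeg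
  have hp₃ : p.coeff 3 ≠ 0 := fun hp₃ => by
    have hzero : hasseDeriv 3 g = 0 := by simpa [hp₃] using hodd 3 (by decide)
    have hlead : (g.natDegree.choose 3 : R) * g.leadingCoeff = 0 := by
      simpa [hasseDeriv_coeff, Nat.sub_add_cancel hdeg] using
        congrArg (coeff · (g.natDegree - 3)) hzero
    have hg : g ≠ 0 := ne_zero_of_natDegree_gt hdeg
    exact mul_ne_zero (mod_cast (Nat.choose_pos hdeg).ne') (leadingCoeff_ne_zero.mpr hg) hlead
  have hdegree : (hasseDeriv 1 g).natDegree ≤ (hasseDeriv 3 g).natDegree :=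
    (natDegree_C_mul hp₃).symm.trans_le (hproportional ▸ natDegree_C_mul_le _ _)
  rw [natDegree_hasseDeriv, natDegree_hasseDeriv] at hdegree
  lia

theorem exists_units_of_evalEval_mul_evalEval_eq {K : Type*} [Field K] [IsAlgClosed K]
    {P Q F G : K[X][X]} (f : K[X]) (g : K → K) (hF : ∀ z, F.evalEval z (f.eval z) = 1)
    (hG : ∀ z, G.evalEval (z - g z) (g z) = 1)
    (h : ∀ x a b, P.evalEval (x + a) b * Q.evalEval x a =
      F.evalEval (x + a) b * G.evalEval x a) :
    ∃ u : Kˣ, P = C (C (u : K)) * F ∧ Q = C (C (↑u⁻¹ : K)) * G := by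
  have hPQ (z : K) : (P.eval f).eval z * Q.evalEval (z - g z) (g z) = 1 := by
    simpa [eval_eval_eq_evalEval, hF, hG] using h (z - g z) (g z) (f.eval z)
  have hdeg : (P.eval f).degree = 0 := by
    by_contra hdeg
    obtain ⟨z, hz⟩ := IsAlgClosed.exists_root _ hdeg
    simpa [hz.eq_zero] using hPQ z
  obtain ⟨c, hc⟩ : ∃ c, P.eval f = C c := ⟨_, eq_C_of_degree_eq_zero hdeg⟩
  have hc₀ : c ≠ 0 := fun hc₀ => by simpa [hc, hc₀] using hPQ 0
  have hQ (x a : K) : c * Q.evalEval x a = G.evalEval x a := by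
    simpa [← eval_eval_eq_evalEval, hc, hF] using h x a (f.eval (x + a))
  refine ⟨Units.mk0 c hc₀, ?_, ?_⟩ <;> refine eq_of_forall_evalEval_eq fun x y => ?_
  · have hP := h (x - g x) (g x) y
    have hQ₁ := (hQ (x - g x) (g x)).trans (hG x)
    rw [sub_add_cancel, hG] at hP
    simp only [Units.val_mk0, evalEval_mul, evalEval_C, eval_C]
    linear_combination c * hP - P.evalEval x y * hQ₁
  · simp [← hQ, hc₀]

/-- The structure polynomials with respect to the bases `a i • Lᵢ`. -/
def rescale (a : ℤ → ℂˣ) (p : ℤ → ℤ → ℂ[X][X]) (i j : ℤ) : ℂ[X][X] :=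
  Pc ((a i * a j / a (i + j) : ℂˣ) : ℂ) * p i j

/-- The structure polynomials with respect to the bases `-L₋ᵢ`. -/
def negGrading (p : ℤ → ℤ → ℂ[X][X]) (i j : ℤ) : ℂ[X][X] := -p (-i) (-j)

theorem evalEval_rescale (a : ℤ → ℂˣ) (p : ℤ → ℤ → ℂ[X][X]) (i j : ℤ) (x y : ℂ) :
    (rescale a p i j).evalEval x y = a i * a j / a (i + j) * (p i j).evalEval x y := by
  simp [rescale, div_eq_mul_inv]

theorem evalEval_negGrading (p : ℤ → ℤ → ℂ[X][X]) (i j : ℤ) (x y : ℂ) :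
    (negGrading p i j).evalEval x y = -(p (-i) (-j)).evalEval x y := by
  simp [negGrading]

theorem rescale_rescale (a d : ℤ → ℂˣ) (p : ℤ → ℤ → ℂ[X][X]) :
    rescale d (rescale a p) = rescale (a * d) p := by
  ext1 i; ext1 j
  refine eq_of_forall_evalEval_eq fun x y => ?_
  simp only [evalEval_rescale, Pi.mul_apply, Units.val_mul]
  field_simp

theorem negGrading_rescale (a : ℤ → ℂˣ) (p : ℤ → ℤ → ℂ[X][X]) :
    negGrading (rescale a p) = rescale (fun i => a (-i)) (negGrading p) := by
  ext1 i; ext1 j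
  simp only [negGrading, rescale, neg_add]
  ring

namespace IsStructureSystem

variable {p : ℤ → ℤ → ℂ[X][X]}

protected theorem rescale (hp : IsStructureSystem p) (a : ℤ → ℂˣ) :
    IsStructureSystem (rescale a p) where
  skew i j x y := by
    simp only [evalEval_rescale, hp.skew i j x y, add_comm j i]
    ring
  jacobi i j k x b c := by
    have hscaled := congrArg ((a i * a j * a k / a (i + j + k) : ℂ) * ·) (hp.jacobi i j k x b c)
    simp only [evalEval_rescale, add_left_comm j i k, ← add_assoc i j k] at hscaled ⊢
    field_simp at hscaled ⊢
    exact hscaled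
  abelian := by simp [rescale, hp.abelian]

protected theorem negGrading (hp : IsStructureSystem p) : IsStructureSystem (negGrading p) where
  skew i j x y := by simp only [evalEval_negGrading, hp.skew (-i) (-j) x y]
  jacobi i j k x a b := by
    simp only [evalEval_negGrading, neg_add, neg_mul_neg]
    simpa only [neg_add] using hp.jacobi (-i) (-j) (-k) x a b
  abelian := by simp [negGrading, hp.abelian]

end IsStructureSystem

/-! ### Normalization -/

namespace IsStructureSystem

variable {p : ℤ → ℤ → ℂ[X][X]} {f : ℂ[X]}

theorem evalEval_zero_neg_one (hp : IsStructureSystem p) (hf : p (-1) 1 = C f) (hf₀ : f ≠ 0)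
    (x a b : ℂ) : (p 0 (-1)).evalEval (-(a + b)) a = -(p 0 1).evalEval (x + b) a := by
  have hmul : f * (((p 0 1).eval (C a)).comp (X + C b) +
      C ((p 0 (-1)).evalEval (-(a + b)) a)) = 0 := by
    refine Polynomial.funext fun x => ?_
    have hjac := hp.jacobi 0 (-1) 1 x a b
    norm_num only [hp.abelian, hf, evalEval_C, evalEval_zero, mul_zero] at hjac
    simp only [eval_mul, eval_add, eval_comp, eval_X, eval_C, eval_zero]
    linear_combination -hjac
  have hzero := congrArg (eval x) ((mul_eq_zero.mp hmul).resolve_left hf₀)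
  simp only [eval_add, eval_comp, eval_X, eval_C, eval_zero] at hzero
  linear_combination hzero

theorem evalEval_zero_one (hp : IsStructureSystem p) (hf : p (-1) 1 = C f) (hf₀ : f ≠ 0)
    (x y : ℂ) : (p 0 1).evalEval x y = (p 0 1).evalEval 0 y := by
  have hx := hp.evalEval_zero_neg_one hf hf₀ x y 0
  have h₀ := hp.evalEval_zero_neg_one hf hf₀ 0 y 0
  simp only [add_zero] at hx h₀
  linear_combination hx - h₀

theorem eval_add_sub_eval_sub (hp : IsStructureSystem p) (hf : p (-1) 1 = C f) (hf₀ : f ≠ 0)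
    (a b : ℂ) :
    f.eval (-(a + b)) * (p 0 1).evalEval 0 (a + b) -
        f.eval (-(a - b)) * (p 0 1).evalEval 0 (a - b) =
      (p 1 1).evalEval 0 b * (p (-1) 2).evalEval (-a) a := by
  have hjac := hp.jacobi (-1) 1 1 (-a) a b
  have hskew := hp.skew 1 0 (-a) b
  norm_num only [hf, evalEval_C, neg_add_cancel] at hjac
  rw [hp.evalEval_zero_one hf hf₀, show -b - -a = a - b by ring] at hskew
  rw [hjac, hskew, hp.evalEval_zero_one hf hf₀ (-a) (a + b), show -a + b = -(a - b) by ring]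
  ring

/-- The Jacobi identity for `(-1, 1, 1)` bounds the degree of `f(-λ) φ(λ)` by two, where
`[L₀_λ L₁] = φ(λ) L₁`. -/
theorem exists_zero_one_eq_Pc (hp : IsStructureSystem p) (hf : p (-1) 1 = C f)
    (hdeg : f.natDegree = 2) (h₀₁ : p 0 1 ≠ 0) :
    ∃ c : ℂˣ, p 0 1 = Pc c ∧ p 0 (-1) = Pc (-c) := by
  have hf₀ : f ≠ 0 := by rintro rfl; simp at hdeg
  obtain ⟨φ, hφ_eval⟩ : ∃ φ : ℂ[X], ∀ y, φ.eval y = (p 0 1).evalEval 0 y :=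
    ⟨(p 0 1).map (evalRingHom 0), fun y => map_evalRingHom_eval 0 y (p 0 1)⟩
  have hφ₀ : φ ≠ 0 := fun h => h₀₁ <| eq_of_forall_evalEval_eq fun x y => by
    rw [hp.evalEval_zero_one hf hf₀, ← hφ_eval, h, eval_zero, evalEval_zero]
  have hle : (f.comp (-X) * φ).natDegree ≤ 2 := by
    refine natDegree_le_two_of_eval_add_sub_eval_sub
      (p := (p 1 1).map (evalRingHom 0)) (q := ((p (-1) 2).eval (-X)).comp (-X)) fun a b => ?_
    have h := hp.eval_add_sub_eval_sub hf hf₀ a b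
    simp only [eval_mul, eval_comp, eval_neg, eval_X, hφ_eval, map_evalRingHom_eval]
    rw [eval_eval_eq_evalEval, eval_neg, eval_X, neg_neg]
    exact h
  have hcomp : f.comp (-X) ≠ 0 := by simpa [comp_eq_zero_iff]
  have hφ_deg : φ.natDegree = 0 := by
    rw [natDegree_mul hcomp hφ₀, natDegree_comp, hdeg, natDegree_neg, natDegree_X] at hle
    lia
  obtain ⟨c, hc⟩ := natDegree_eq_zero.mp hφ_deg
  have hc₀ : c ≠ 0 := by rintro rfl; exact hφ₀ (by rw [← hc, C_0])
  have h01 (x y : ℂ) : (p 0 1).evalEval x y = c := by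
    rw [hp.evalEval_zero_one hf hf₀, ← hφ_eval, ← hc, eval_C]
  refine ⟨Units.mk0 c hc₀, eq_of_forall_evalEval_eq fun x y => ?_,
    eq_of_forall_evalEval_eq fun x y => ?_⟩
  · rw [h01, evalEval_Pc, Units.val_mk0]
  · have h := hp.evalEval_zero_neg_one hf hf₀ 0 y (-x - y)
    rw [h01] at h
    simpa using h

end IsStructureSystem

/-- The form to which `p` can be rescaled when `p (-1) 1` is quadratic in `∂`. -/
structure IsNormalized (s c : ℂ) (p : ℤ → ℤ → ℂ[X][X]) : Prop extends IsStructureSystem p where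
  zero_one : p 0 1 = Pc (-1)
  zero_neg_one : p 0 (-1) = Pc 1
  neg_one_one : p (-1) 1 = -(Pd ^ 2 + Pc (3 * s) * Pd + Pc c)

theorem IsStructureSystem.exists_isNormalized_rescale {p : ℤ → ℤ → ℂ[X][X]} {f : ℂ[X]}
    (hp : IsStructureSystem p) (hf : p (-1) 1 = C f) (hdeg : f.natDegree = 2) (h₀₁ : p 0 1 ≠ 0) :
    ∃ a : ℤ → ℂˣ, ∃ s c : ℂ, IsNormalized s c (rescale a p) := by
  obtain ⟨d, hd₁, hd₂⟩ := hp.exists_zero_one_eq_Pc hf hdeg h₀₁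
  have hlead : f.coeff 2 ≠ 0 := by simpa [← hdeg] using fun h : f = 0 => by simp [h] at hdeg
  have hquad : f = C (f.coeff 2) * X ^ 2 + C (f.coeff 1) * X + C (f.coeff 0) :=
    eq_quadratic_of_degree_le_two (natDegree_le_iff_degree_le.mp hdeg.le)
  generalize f.coeff 2 = r, f.coeff 1 = r₁, f.coeff 0 = r₀ at hlead hquad
  refine ⟨fun i => if i = 0 then -d⁻¹ else if i = -1 then (d * Units.mk0 r hlead)⁻¹ else 1,
    r₁ / (3 * r), r₀ / r, hp.rescale _, ?_, ?_, ?_⟩ <;>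
  refine eq_of_forall_evalEval_eq fun x y => ?_
  · simp [evalEval_rescale, hd₁]
  · rw [evalEval_rescale, hd₂]
    simp only [↓reduceIte, Units.val_neg, Units.val_inv_eq_inv_val, Int.reduceNeg, neg_eq_zero,
      one_ne_zero, Units.val_mul, Units.val_mk0, zero_add, evalEval_Pc]
    field_simp
  · rw [evalEval_rescale, hf, evalEval_C, hquad]
    simp only [Int.reduceNeg, neg_eq_zero, one_ne_zero, ↓reduceIte, Units.val_inv_eq_inv_val,
      Units.val_mul, Units.val_mk0, reduceCtorEq, Units.val_one, mul_one, neg_add_cancel,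
      Units.val_neg, eval_add, eval_mul, eval_C, eval_pow, eval_X, evalEval_add, evalEval_neg,
      evalEval_Pc, evalEval_mul, evalEval_Pd, evalEval_pow]
    field_simp

namespace IsNormalized

variable {s c : ℂ} {p : ℤ → ℤ → ℂ[X][X]}

theorem evalEval_neg_one_one (h : IsNormalized s c p) (x y : ℂ) :
    (p (-1) 1).evalEval x y = -(x ^ 2 + 3 * s * x + c) := by
  simp [h.neg_one_one]

theorem evalEval_one_zero (h : IsNormalized s c p) (x y : ℂ) : (p 1 0).evalEval x y = 1 := by
  simp [h.skew 1 0, h.zero_one]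

theorem evalEval_one_neg_one (h : IsNormalized s c p) (x y : ℂ) :
    (p 1 (-1)).evalEval x y = x ^ 2 + 3 * s * x + c := by
  simp [h.skew 1 (-1), h.evalEval_neg_one_one]

protected theorem negGrading (h : IsNormalized s c p) : IsNormalized s c (negGrading p) where
  toIsStructureSystem := h.toIsStructureSystem.negGrading
  zero_one := by simp [negGrading, h.zero_neg_one, Pc]
  zero_neg_one := by simp [negGrading, h.zero_one, Pc]
  neg_one_one := eq_of_forall_evalEval_eq fun x y => by
    simp [evalEval_negGrading, h.evalEval_one_neg_one]

end IsNormalized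

/-! ### The rows `±1` -/

/-- The matrix `(f r * g t)` has rank at most one, so its `2 × 2` minors vanish. -/
theorem eq_zero_of_forall_mul_eq_mul_add {R : Type*} [CommRing R] {f g : R → R} {k : R}
    (h : ∀ r t, f r * g t = r * t + k) : k = 0 := by
  linear_combination f 0 * g 1 * h 1 0 - f 0 * g 0 * h 1 1 - (1 + k) * h 0 0 + k * h 0 1

namespace IsNormalized

variable {s c : ℂ} {p : ℤ → ℤ → ℂ[X][X]}

theorem evalEval_one_one_mul (h : IsNormalized s c p) (x a b : ℂ) :
    (p 1 1).evalEval (x + a) b * (p (-1) (1 + 1)).evalEval x a =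
      (pCL2 0 s 1 1).evalEval (x + a) b * (pCL2 0 s (-1) (1 + 1)).evalEval x a := by
  have hjac := h.jacobi (-1) 1 1 x a b
  rw [neg_add_cancel, h.zero_one, h.evalEval_neg_one_one, h.evalEval_neg_one_one,
    h.evalEval_one_zero, evalEval_Pc] at hjac
  rw [hjac, evalEval_pCL2_zero, evalEval_pCL2_zero]
  push_cast
  ring

theorem evalEval_one_mul (h : IsNormalized s c p) {n : ℤ} {u : ℂˣ}
    (h₀ : p 0 (n + 1) = Pc (-↑(n + 1))) (h₁ : p 1 n = Pc u * pCL2 0 s 1 n)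
    (h₂ : p (-1) (n + 1) = Pc (↑u⁻¹ : ℂ) * pCL2 0 s (-1) (n + 1)) (x a b : ℂ) :
    (p 1 (n + 1)).evalEval (x + a) b * (p (-1) (n + 1 + 1)).evalEval x a =
      (pCL2 0 s 1 (n + 1)).evalEval (x + a) b * (pCL2 0 s (-1) (n + 1 + 1)).evalEval x a +
        (n + 1) * (c - 2 * s ^ 2) := by
  have hjac := h.jacobi (-1) 1 (n + 1) x a b
  rw [neg_add_cancel, neg_add_cancel_comm_assoc, h₀, h₁, h₂, h.evalEval_neg_one_one,
    add_comm 1 (n + 1)] at hjac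
  simp only [hjac, evalEval_mul, evalEval_Pc, evalEval_pCL2_zero, mul_mul_mul_comm _ _ (u : ℂ),
    Units.inv_mul, one_mul]
  push_cast
  ring

theorem exists_units_of_evalEval_one_mul (h : IsNormalized s c p) {n : ℤ} (hn : 0 < n)
    (h₀ : p 0 n = Pc (-n))
    (hmul : ∀ x a b, (p 1 n).evalEval (x + a) b * (p (-1) (n + 1)).evalEval x a =
      (pCL2 0 s 1 n).evalEval (x + a) b * (pCL2 0 s (-1) (n + 1)).evalEval x a) :
    ∃ u : ℂˣ, p 1 n = Pc u * pCL2 0 s 1 n ∧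
      p (-1) (n + 1) = Pc (↑u⁻¹ : ℂ) * pCL2 0 s (-1) (n + 1) ∧
      p 0 (n + 1) = Pc (-↑(n + 1)) := by
  have hn₀ : (n + 1 : ℂ) ≠ 0 := by exact_mod_cast (by lia : n + 1 ≠ 0)
  have hF (z : ℂ) : (pCL2 0 s 1 n).evalEval z
      ((C (n + 1 : ℂ)⁻¹ * (C (1 - s * (1 - n)) - X)).eval z) = 1 := by
    simp only [evalEval_pCL2_zero, eval_mul, eval_sub, eval_C, eval_X, Int.cast_one]
    field_simp
    ring
  have hG (z : ℂ) : (pCL2 0 s (-1) (n + 1)).evalEval (z - (1 + z + s * (n + 2)) / (n + 1))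
      ((1 + z + s * (n + 2)) / (n + 1)) = 1 := by
    simp only [evalEval_pCL2_zero, Int.cast_add, Int.cast_one, Int.cast_neg]
    field_simp
    ring
  obtain ⟨u, h₁, h₂⟩ : ∃ u : ℂˣ, p 1 n = Pc u * pCL2 0 s 1 n ∧
      p (-1) (n + 1) = Pc (↑u⁻¹ : ℂ) * pCL2 0 s (-1) (n + 1) :=
    exists_units_of_evalEval_mul_evalEval_eq _ _ hF hG hmul
  refine ⟨u, h₁, h₂, eq_of_forall_evalEval_eq fun x y => ?_⟩
  obtain ⟨b, hb⟩ : ∃ b : ℂ, x + y + (n + 1) * b + s * (1 - n) = 1 :=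
    ⟨(1 - (x + y) - s * (1 - n)) / (n + 1), by field_simp; ring⟩
  have hjac := h.jacobi 0 1 n x y b
  rw [zero_add, zero_add, add_comm 1 n, h₀, h.zero_one, h₁] at hjac
  simp only [evalEval_mul, evalEval_Pc, evalEval_pCL2_zero] at hjac ⊢
  push_cast at hjac ⊢
  refine mul_left_cancel₀ u.ne_zero ?_
  linear_combination hjac - u * ((p 0 (n + 1)).evalEval x y + n + 1) * hb

theorem eq_two_mul_sq (h : IsNormalized s c p) : c = 2 * s ^ 2 := by
  obtain ⟨u, h₁, h₂, h₀⟩ :=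
    h.exists_units_of_evalEval_one_mul one_pos (by simp [h.zero_one]) h.evalEval_one_one_mul
  have hzero : 2 * (c - 2 * s ^ 2) = 0 := by
    refine eq_zero_of_forall_mul_eq_mul_add
      (f := fun r => (p 1 2).evalEval 0 ((r + s) / 3))
      (g := fun t => (p (-1) 3).evalEval (-((t + 4 * s) / 3)) ((t + 4 * s) / 3)) fun r t => ?_
    have hmul := h.evalEval_one_mul h₀ h₁ h₂ (-((t + 4 * s) / 3)) ((t + 4 * s) / 3) ((r + s) / 3)
    norm_num only [neg_add_cancel, evalEval_pCL2_zero] at hmul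
    rw [hmul]
    ring
  linear_combination hzero / 2

theorem exists_units_one_neg_one (h : IsNormalized s c p) {n : ℤ} (hn : 1 ≤ n) :
    ∃ u : ℂˣ, p 1 n = Pc u * pCL2 0 s 1 n ∧
      p (-1) (n + 1) = Pc (↑u⁻¹ : ℂ) * pCL2 0 s (-1) (n + 1) ∧
      p 0 (n + 1) = Pc (-↑(n + 1)) := by
  induction n, hn using Int.leInduction with
  | base =>
    exact h.exists_units_of_evalEval_one_mul one_pos (by simp [h.zero_one]) h.evalEval_one_one_mul
  | succ n hn ih =>
    obtain ⟨u, h₁, h₂, h₀⟩ := ih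
    refine h.exists_units_of_evalEval_one_mul (by lia) h₀ fun x a b => ?_
    simpa [h.eq_two_mul_sq] using h.evalEval_one_mul h₀ h₁ h₂ x a b

end IsNormalized

theorem pECL_eq_pCL2_zero (s : ℂ) {i j : ℤ} (hi : i ≠ 0) (hj : j ≠ 0) (hij : i + j ≠ 0) :
    pECL s i j = pCL2 0 s i j := by
  simp [pECL, pCL2, hi, hj, hij]

theorem negGrading_pCL2_zero (s : ℂ) : negGrading (pCL2 0 s) = pCL2 0 s := by
  ext1 i; ext1 j
  refine eq_of_forall_evalEval_eq fun x y => ?_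
  rw [evalEval_negGrading, evalEval_pCL2_zero, evalEval_pCL2_zero]
  push_cast
  ring

/-- The family with value `1` at `0` and `±1` whose successive quotients are `u n` from `n` to
`n + 1` and `v n` from `-n` to `-(n + 1)`, for `n ≥ 1`. -/
def scaling (u v : ℤ → ℂˣ) (i : ℤ) : ℂˣ :=
  (∏ k ∈ Finset.Ico 1 i, u k) * ∏ k ∈ Finset.Ico 1 (-i), v k

section scaling

variable (u v : ℤ → ℂˣ)

theorem scaling_neg (i : ℤ) : scaling u v (-i) = scaling v u i := by
  simp only [scaling, neg_neg, mul_comm]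

theorem scaling_eq_one {i : ℤ} (h₁ : -1 ≤ i) (h₂ : i ≤ 1) : scaling u v i = 1 := by
  rw [scaling, Finset.Ico_eq_empty (by lia), Finset.Ico_eq_empty (by lia), Finset.prod_empty,
    Finset.prod_empty, one_mul]

theorem scaling_add_one {n : ℤ} (hn : 1 ≤ n) : scaling u v (n + 1) = scaling u v n * u n := by
  rw [scaling, scaling, ← Finset.insert_Ico_right_eq_Ico_add_one hn,
    Finset.prod_insert Finset.right_notMem_Ico, Finset.Ico_eq_empty (b := -(n + 1)) (by lia),
    Finset.Ico_eq_empty (b := -n) (by lia), Finset.prod_empty, mul_one, mul_one, mul_comm]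

variable {p : ℤ → ℤ → ℂ[X][X]} {P : ℂ[X][X]} {n : ℤ}

theorem rescale_scaling_one (hn : 1 ≤ n) (hP : p 1 n = Pc (u n) * P) :
    rescale (scaling u v) p 1 n = P := by
  refine eq_of_forall_evalEval_eq fun x y => ?_
  rw [evalEval_rescale, add_comm 1 n, scaling_add_one u v hn, scaling_eq_one u v (by lia) le_rfl,
    hP, evalEval_mul, evalEval_Pc, Units.val_mul]
  field_simp
  exact one_mul _

theorem rescale_scaling_neg_one (hn : 1 ≤ n) (hP : p (-1) (n + 1) = Pc (↑(u n)⁻¹ : ℂ) * P) :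
    rescale (scaling u v) p (-1) (n + 1) = P := by
  refine eq_of_forall_evalEval_eq fun x y => ?_
  rw [evalEval_rescale, neg_add_cancel_comm_assoc, scaling_add_one u v hn,
    scaling_eq_one u v le_rfl (by lia), hP, evalEval_mul, evalEval_Pc, Units.val_mul]
  simp

end scaling

namespace IsNormalized

variable {s c : ℂ} {p : ℤ → ℤ → ℂ[X][X]}

theorem rescale_scaling (h : IsNormalized s c p) (u v : ℤ → ℂˣ) :
    IsNormalized s c (rescale (scaling u v) p) where
  toIsStructureSystem := h.rescale _
  zero_one := by simp [rescale, scaling_eq_one, h.zero_one, Pc]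
  zero_neg_one := by simp [rescale, scaling_eq_one, h.zero_neg_one, Pc]
  neg_one_one := by simp [rescale, scaling_eq_one, h.neg_one_one, Pc]

theorem one_eq_pECL (h : IsNormalized s c p) (hpos : ∀ n ≥ 1, p 1 n = pCL2 0 s 1 n)
    (hneg : ∀ n ≥ 1, negGrading p (-1) (n + 1) = pCL2 0 s (-1) (n + 1)) (j : ℤ) :
    p 1 j = pECL s 1 j := by
  rcases (by lia : 1 ≤ j ∨ j = 0 ∨ j = -1 ∨ 1 ≤ -j - 1) with hj | rfl | rfl | hj
  · rw [hpos j hj, pECL_eq_pCL2_zero s one_ne_zero (by lia) (by lia)]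
  · refine eq_of_forall_evalEval_eq fun x y => ?_
    simp [h.evalEval_one_zero, pECL]
  · refine eq_of_forall_evalEval_eq fun x y => ?_
    simp only [h.evalEval_one_neg_one, h.eq_two_mul_sq, pECL, add_neg_cancel, if_true, Int.cast_one,
      evalEval_mul, evalEval_Pc, evalEval_add, evalEval_Pd]
    ring
  · rw [pECL_eq_pCL2_zero s one_ne_zero (by lia) (by lia), ← negGrading_pCL2_zero]
    simpa [negGrading, neg_eq_iff_eq_neg] using hneg _ hj

theorem exists_rescale_one_eq_pECL (h : IsNormalized s c p) :
    ∃ a : ℤ → ℂˣ, (∀ j, rescale a p 1 j = pECL s 1 j) ∧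
      ∀ j, negGrading (rescale a p) 1 j = pECL s 1 j := by
  choose! u hu₁ hu₂ _ using fun n hn => h.exists_units_one_neg_one (n := n) hn
  choose! v hv₁ hv₂ _ using fun n hn => h.negGrading.exists_units_one_neg_one (n := n) hn
  have hneg : negGrading (rescale (scaling u v) p) = rescale (scaling v u) (negGrading p) := by
    simp only [negGrading_rescale, scaling_neg]
  refine ⟨scaling u v, (h.rescale_scaling u v).one_eq_pECL
    (fun n hn => rescale_scaling_one u v hn (hu₁ n hn)) fun n hn => ?_,
    (h.rescale_scaling u v).negGrading.one_eq_pECL (fun n hn => ?_) fun n hn => ?_⟩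
  · rw [hneg, rescale_scaling_neg_one v u hn (hv₂ n hn)]
  · rw [hneg, rescale_scaling_one v u hn (hv₁ n hn)]
  · simpa [negGrading] using rescale_scaling_neg_one u v hn (hu₂ n hn)

end IsNormalized

/-! ### The model `ECL(s)` -/

theorem eq_of_forall_eval_add_mul_evalEval_eq {R : Type*} [CommRing R] [IsDomain R] [Infinite R]
    {g : R[X]} (hg : g ≠ 0) {p q : R[X][X]}
    (h : ∀ x y, g.eval (x + y) * p.evalEval x y = g.eval (x + y) * q.evalEval x y) : p = q := by
  refine eq_of_forall_evalEval_eq fun x y => congrArg (eval x) ?_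
  refine mul_left_cancel₀ (a := g.comp (X + C y)) ?_ (Polynomial.funext fun x => ?_)
  · simpa [comp_X_add_C_eq_zero_iff] using hg
  · simpa only [eval_mul, eval_comp, eval_add, eval_X, eval_C] using h x y

/-- In `ECL(s)`, the elements `(∂ + s)L₀` and `Lᵢ` for `i ≠ 0` satisfy the bracket relations of
`CL₂(0, s)`; `gaugeFactor s i` is the polynomial in `∂` by which `Lᵢ` is multiplied. -/
def gaugeFactor (s : ℂ) (i : ℤ) : ℂ[X] := if i = 0 then X + C s else 1

theorem gaugeFactor_of_ne_zero (s : ℂ) {i : ℤ} (hi : i ≠ 0) : gaugeFactor s i = 1 := if_neg hi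

theorem gaugeFactor_ne_zero (s : ℂ) (i : ℤ) : gaugeFactor s i ≠ 0 := by
  rw [gaugeFactor]
  split
  exacts [X_add_C_ne_zero s, one_ne_zero]

theorem gaugeFactor_mul_evalEval_pECL (s : ℂ) {i j : ℤ} (hi : i ≠ 0) (x y : ℂ) :
    (gaugeFactor s j).eval (x + y) * (pECL s i j).evalEval x y =
      (gaugeFactor s (i + j)).eval x * (pCL2 0 s i j).evalEval x y := by
  rcases eq_or_ne j 0 with rfl | hj
  · simp only [gaugeFactor, ↓reduceIte, eval_add, eval_X, eval_C, pECL, add_zero, hi, evalEval_Pc,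
      eval_one, evalEval_pCL2_zero, Int.cast_zero, sub_zero, one_mul]
    ring
  rcases eq_or_ne (i + j) 0 with hij | hij
  · obtain rfl := eq_neg_of_add_eq_zero_right hij
    simp only [gaugeFactor, neg_eq_zero, hi, ↓reduceIte, eval_one, pECL, add_neg_cancel,
      evalEval_mul, evalEval_Pc, evalEval_add, evalEval_Pd, one_mul, eval_add, eval_X, eval_C,
      evalEval_pCL2_zero, Int.cast_neg, zero_mul, add_zero, sub_neg_eq_add]
    ring
  · rw [pECL_eq_pCL2_zero s hi hj hij, gaugeFactor_of_ne_zero s hj, gaugeFactor_of_ne_zero s hij,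
      eval_one, eval_one]

theorem negGrading_pECL (s : ℂ) : negGrading (pECL s) = pECL s := by
  ext1 i; ext1 j
  simp only [negGrading, pECL, ← neg_add, neg_eq_zero, Int.cast_neg]
  split_ifs <;> simp only [Pc, map_neg, map_add, map_sub, map_mul] <;> ring

namespace IsStructureSystem

variable {p : ℤ → ℤ → ℂ[X][X]} {s : ℂ}

theorem eq_pECL_of_one_le (hp : IsStructureSystem p) (h₁ : ∀ j, p 1 j = pECL s 1 j) {i : ℤ}
    (hi : 1 ≤ i) (j : ℤ) : p i j = pECL s i j := by
  induction i, hi using Int.leInduction generalizing j with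
  | base => exact h₁ j
  | succ i hi ih =>
    rw [add_comm i 1]
    refine eq_of_forall_eval_add_mul_evalEval_eq (gaugeFactor_ne_zero s j) fun x y => ?_
    have hi₀ : (1 + i : ℂ) ≠ 0 := by exact_mod_cast (by lia : 1 + i ≠ 0)
    obtain ⟨a, ha⟩ : ∃ a : ℂ, -y + (1 + i) * a + s * (1 - i) = 1 :=
      ⟨(1 + y - s * (1 - i)) / (1 + i), by field_simp; ring⟩
    have hjac := hp.jacobi 1 i j x a (y - a)
    rw [h₁, h₁, h₁, ih, ih, add_sub_cancel, pECL_eq_pCL2_zero s (j := i) one_ne_zero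
      (by lia) (by lia), evalEval_pCL2_zero] at hjac
    have hij := gaugeFactor_mul_evalEval_pECL s (j := j) (by lia : i ≠ 0) (x + a) (y - a)
    have h1ij := gaugeFactor_mul_evalEval_pECL s (j := i + j) one_ne_zero x a
    have h1j := gaugeFactor_mul_evalEval_pECL s (j := j) one_ne_zero (x + (y - a)) a
    have hi1j := gaugeFactor_mul_evalEval_pECL s (j := 1 + j) (by lia : i ≠ 0) x (y - a)
    rw [gaugeFactor_mul_evalEval_pECL s (by lia : 1 + i ≠ 0), add_assoc 1 i j]
    rw [show x + a + (y - a) = x + y by ring] at hij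
    rw [show x + (y - a) + a = x + y by ring] at h1j
    rw [add_left_comm i 1 j] at hi1j
    simp only [evalEval_pCL2_zero] at hij h1ij h1j hi1j ⊢
    push_cast at hjac hij h1ij h1j hi1j ⊢
    set g := (gaugeFactor s (1 + (i + j))).eval x
    set h := (gaugeFactor s j).eval (x + y)
    linear_combination -h * hjac + (pECL s 1 (i + j)).evalEval x a * hij +
      (i * (x + a) + (i + j) * (y - a) + s * (i - j)) * h1ij -
      (pECL s i (1 + j)).evalEval x (y - a) * h1j -
      (x + (y - a) + (1 + j) * a + s * (1 - j)) * hi1j -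
      (h * (p (1 + i) j).evalEval x y -
        g * ((1 + i) * x + (1 + i + j) * y + s * (1 + i - j))) * ha

theorem eq_pECL (hp : IsStructureSystem p) (hpos : ∀ j, p 1 j = pECL s 1 j)
    (hneg : ∀ j, negGrading p 1 j = pECL s 1 j) : p = pECL s := by
  have hne {i : ℤ} (hi : i ≠ 0) (j : ℤ) : p i j = pECL s i j := by
    rcases (by lia : 1 ≤ i ∨ 1 ≤ -i) with hi | hi
    · exact hp.eq_pECL_of_one_le hpos hi j
    · have h := hp.negGrading.eq_pECL_of_one_le hneg hi (-j)
      rw [← negGrading_pECL] at h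
      simpa [negGrading] using h
  ext1 i; ext1 j
  rcases eq_or_ne i 0 with rfl | hi
  · rcases eq_or_ne j 0 with rfl | hj
    · simp [hp.abelian, pECL, Pc]
    · refine eq_of_forall_evalEval_eq fun x y => ?_
      rw [hp.skew, hne hj]
      simp [pECL, hj]
  · exact hne hi j

end IsStructureSystem

theorem IsStructureSystem.exists_rescale_eq_pECL {p : ℤ → ℤ → ℂ[X][X]} {f : ℂ[X]}
    (hp : IsStructureSystem p) (hf : p (-1) 1 = C f) (hdeg : f.natDegree = 2) (h₀₁ : p 0 1 ≠ 0) :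
    ∃ a : ℤ → ℂˣ, ∃ s : ℂ, rescale a p = pECL s := by
  obtain ⟨a, s, c, hnorm⟩ := hp.exists_isNormalized_rescale hf hdeg h₀₁
  obtain ⟨d, hpos, hneg⟩ := hnorm.exists_rescale_one_eq_pECL
  exact ⟨a * d, s, by rw [← rescale_rescale]; exact (hnorm.rescale d).eq_pECL hpos hneg⟩

namespace LieConformalAlgebra

variable {L : Type} [AddCommGroup L] [Module ℂ L] {A : LieConformalAlgebra L}

theorem BracketEq.units_smul {u v t : L} {p : ℂ[X][X]} (h : A.BracketEq u v t p) (a b c : ℂˣ) :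
    A.BracketEq (a • u) (b • v) (c • t) (Pc ((a * b / c : ℂˣ) : ℂ) * p) := by
  rw [bracketEq_iff_bracketCoeff] at h ⊢
  intro n
  simp only [Units.smul_def, map_smul, LinearMap.smul_apply, h n, Pc, coeff_C_mul, map_mul, aeval_C,
    Module.End.mul_apply, Module.algebraMap_end_apply, smul_smul, ← Units.val_mul]
  rw [mul_div_cancel, mul_comm a b]

end LieConformalAlgebra

namespace RankOneContext

variable {L : Type} [AddCommGroup L] [Module ℂ L] (A : RankOneContext L)

theorem isFreePolyBasis_units_smul_bas (hG : ∀ i, A.G i ≠ ⊥) (a : ℤ → ℂˣ) :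
    A.IsFreePolyBasis fun i => a i • A.bas i := by
  let b (i : ℤ) : Module.Basis ℕ ℂ (A.G i) :=
    (Module.Basis.span (A.bas_indep i (hG i))).map (LinearEquiv.ofEq _ _ (A.bas_span i (hG i)).symm)
  have hb (i : ℤ) (k : ℕ) : (b i k : L) = (⇑A.D)^[k] (A.bas i) := by
    simp [b, Module.Basis.span_apply]
  let B := ((A.internal.collectedBasis b).reindex (Equiv.sigmaEquivProd ℤ ℕ)).unitsSMul
    fun q => a q.1
  have hB : (fun q : ℤ × ℕ => (⇑A.D)^[q.2] (a q.1 • A.bas q.1)) = B := by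
    funext q
    simp [B, Module.Basis.unitsSMul_apply, Units.smul_def, hb, ← Module.End.pow_apply]
  exact ⟨hB ▸ B.linearIndependent, hB ▸ B.span_eq⟩

theorem G_ne_bot_of_rescale_eq_pECL {a : ℤ → ℂˣ} {s : ℂ} (h : rescale a A.sp = pECL s) (i : ℤ) :
    A.G i ≠ ⊥ := by
  rcases eq_or_ne i 0 with rfl | hi
  · exact A.supp_zero
  intro hbot
  have hpECL : pECL s i 0 = 0 := by rw [← h, rescale, A.sp_zero i 0 (.inl hbot), mul_zero]
  simp [pECL, Pc, hi] at hpECL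

theorem isECL_of_rescale_eq_pECL {a : ℤ → ℂˣ} {s : ℂ} (h : rescale a A.sp = pECL s) :
    A.IsECL s :=
  ⟨fun i => a i • A.bas i, A.isFreePolyBasis_units_smul_bas (A.G_ne_bot_of_rescale_eq_pECL h) a,
    fun i j => h ▸ LieConformalAlgebra.BracketEq.units_smul (A.sp_brkt i j) _ _ _⟩

end RankOneContext

theorem classV_deg_two_ECL_general {L : Type} [AddCommGroup L] [Module ℂ L] (A : RankOneContext L)
    (h₀₁ : A.sp 0 1 ≠ 0) (hmem₁ : (A.sp (-1) 1).natDegree = 0)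
    (hdeg₁ : ((A.sp (-1) 1).coeff 0).natDegree = 2) :
    ∃ s : ℂ, A.toLieConformalAlgebra.IsECL s := by
  obtain ⟨a, s, h⟩ := A.isStructureSystem_sp.exists_rescale_eq_pECL
    (eq_C_of_natDegree_eq_zero hmem₁) hdeg₁ h₀₁
  exact ⟨s, A.isECL_of_rescale_eq_pECL h⟩

/-- a class `𝒱` algebra with `deg p_{-1,1}(∂) = 2` is isomorphic
to `ECL(s)` for some `s ∈ ℂ`. -/
theorem classV_deg_two_ECL
    {L : Type} [AddCommGroup L] [Module ℂ L] (C : ClassV L)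
    (hmem₁ : (C.sp (-1) 1).natDegree = 0)
    (hdeg₁ : ((C.sp (-1) 1).coeff 0).natDegree = 2) :
    ∃ s : ℂ, C.toLieConformalAlgebra.IsECL s :=
  classV_deg_two_ECL_general C.toRankOneContext C.ne_01 hmem₁ hdeg₁
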